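/- Let R be a Cohen-Macaulay ring with dim R = d < ∞ and let X be a resolving subcategory of mod R. The following are equivalent: (1) X is dominant; (2) for every p ∈ Spec R there exists n ≥ 0 such that some n-th syzygy Ω^n(R/p) belongs to X; (3) for every p ∈ Spec R, some d-th syzygy Ω^d(R/p) belongs to X. -/

import Mathlib

universe u

open CategoryTheory

namespace ResolvPaper

variable (R : Type u) [CommRing R]

/-- `IsSES f g` means `0 → A → B → C → 0` is a short exact sequence. -/
def IsSES {R : Type u} [CommRing R] {A B C : Type u} [AddCommGroup A] [Module R A]
    [AddCommGroup B] [Module R B] [AddCommGroup C] [Module R C]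
    (f : A →ₗ[R] B) (g : B →ₗ[R] C) : Prop :=
  Function.Injective f ∧ Function.Surjective g ∧ LinearMap.range f = LinearMap.ker g

/-- A resolving subcategory of `mod R`, viewed as a set of bundled modules
closed under isomorphism, containing the finitely generated projective modules, and closed
under direct summands, extensions and syzygies. -/
structure IsResolving (𝒳 : Set (ModuleCat.{u} R)) : Prop where
  fg : ∀ M ∈ 𝒳, Module.Finite R M
  iso_closed : ∀ M N : ModuleCat.{u} R, Nonempty (M ≃ₗ[R] N) → M ∈ 𝒳 → N ∈ 𝒳
  proj_mem : ∀ M : ModuleCat.{u} R, Module.Finite R M → Module.Projective R M → M ∈ 𝒳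
  summand_closed : ∀ M N : ModuleCat.{u} R, ModuleCat.of R (↥M × ↥N) ∈ 𝒳 → M ∈ 𝒳
  ext_closed : ∀ (A B C : ModuleCat.{u} R) (f : A →ₗ[R] B) (g : B →ₗ[R] C),
    IsSES f g → A ∈ 𝒳 → C ∈ 𝒳 → B ∈ 𝒳
  syzygy_closed : ∀ (K P M : ModuleCat.{u} R) (f : K →ₗ[R] P) (g : P →ₗ[R] M),
    IsSES f g → Module.Finite R K → Module.Finite R P → Module.Projective R P →
    M ∈ 𝒳 → K ∈ 𝒳

/-- The resolving closure: the smallest resolving subcategory containing `S`. -/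
def resClosure (S : Set (ModuleCat.{u} R)) : Set (ModuleCat.{u} R) :=
  ⋂₀ {𝒳 | IsResolving R 𝒳 ∧ S ⊆ 𝒳}

/-- An extension-closed subcategory of `mod R`: closed under isomorphism,
direct summands and extensions. -/
def IsExtClosed (𝒳 : Set (ModuleCat.{u} R)) : Prop :=
  (∀ M N : ModuleCat.{u} R, Nonempty (M ≃ₗ[R] N) → M ∈ 𝒳 → N ∈ 𝒳) ∧
  (∀ M N : ModuleCat.{u} R, ModuleCat.of R (↥M × ↥N) ∈ 𝒳 → M ∈ 𝒳) ∧
  (∀ (A B C : ModuleCat.{u} R) (f : A →ₗ[R] B) (g : B →ₗ[R] C),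
    IsSES f g → A ∈ 𝒳 → C ∈ 𝒳 → B ∈ 𝒳)

/-- The extension closure of a set of modules. -/
def extClosure (S : Set (ModuleCat.{u} R)) : Set (ModuleCat.{u} R) :=
  ⋂₀ {𝒳 | IsExtClosed R 𝒳 ∧ S ⊆ 𝒳}

/-- `add R`: direct summands of finite free modules. -/
def addR : Set (ModuleCat.{u} R) :=
  {M | ∃ (n : ℕ) (N : ModuleCat.{u} R), Nonempty ((↥M × ↥N) ≃ₗ[R] (Fin n → R))}

/-- `pdLE n M` : the projective dimension of `M` is at most `n`. -/
def pdLE : ℕ → ModuleCat.{u} R → Prop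
  | 0, M => Module.Projective R M
  | n+1, M => ∃ (K P : ModuleCat.{u} R) (f : K →ₗ[R] P) (g : P →ₗ[R] M),
      Module.Finite R P ∧ Module.Projective R P ∧ IsSES f g ∧ pdLE n K

/-- The projective dimension, an element of `WithBot ℕ∞`; the zero module
has projective dimension `⊥ = -∞`. -/
noncomputable def pdim (M : ModuleCat.{u} R) : WithBot ℕ∞ :=
  sInf {x : WithBot ℕ∞ | (x = ⊥ ∧ Subsingleton M) ∨ ∃ n : ℕ, x = (n : ℕ∞) ∧ pdLE R n M}

/-- The depth of `M` with respect to the ideal `I`: the supremum of lengths of weakly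
`M`-regular sequences contained in `I`.  The zero module has depth `∞`. -/
noncomputable def depthE (I : Ideal R) (M : Type u) [AddCommGroup M] [Module R M] : ℕ∞ :=
  sSup {x : ℕ∞ | ∃ rs : List R, (∀ r ∈ rs, r ∈ I) ∧
    RingTheory.Sequence.IsWeaklyRegular M rs ∧ x = rs.length}

/-- The grade of an ideal: the length of a maximal `R`-regular sequence in `I`. -/
noncomputable def gradeE (I : Ideal R) : ℕ∞ := depthE R I R

/-- A grade consistent function on `Spec R`. -/
def GradeConsistent (f : PrimeSpectrum R → ℕ) : Prop :=
  (∀ p : PrimeSpectrum R, (f p : ℕ∞) ≤ gradeE R p.asIdeal) ∧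
  (∀ p q : PrimeSpectrum R, p.asIdeal ≤ q.asIdeal → f p ≤ f q)

/-- The localization of a module at a prime, as a module over the local ring `R_p`. -/
noncomputable abbrev localizeM (p : PrimeSpectrum R) (M : ModuleCat.{u} R) :
    ModuleCat.{u} (Localization.AtPrime p.asIdeal) :=
  ModuleCat.of (Localization.AtPrime p.asIdeal) (LocalizedModule p.asIdeal.primeCompl M)

/-- `pd_{R_p} M_p`. -/
noncomputable def localPdim (p : PrimeSpectrum R) (M : ModuleCat.{u} R) : WithBot ℕ∞ :=
  pdim (Localization.AtPrime p.asIdeal) (localizeM R p M)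

/-- `depth_{R_p} M_p`. -/
noncomputable def localDepth (p : PrimeSpectrum R) (M : ModuleCat.{u} R) : ℕ∞ :=
  depthE (Localization.AtPrime p.asIdeal)
    (IsLocalRing.maximalIdeal (Localization.AtPrime p.asIdeal))
    (LocalizedModule p.asIdeal.primeCompl M)

/-- The height of a prime ideal. -/
noncomputable def heightE (p : PrimeSpectrum R) : ℕ∞ := Order.height p

/-- `PD(R)` : finitely generated modules of finite projective dimension. -/
def PDcat : Set (ModuleCat.{u} R) :=
  {M | Module.Finite R M ∧ ∃ n : ℕ, pdLE R n M}

/-- `MCM(R)` : maximal Cohen-Macaulay modules. -/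
def MCMcat : Set (ModuleCat.{u} R) :=
  {M | Module.Finite R M ∧ ∀ p : PrimeSpectrum R, heightE R p ≤ localDepth R p M}

/-- The nonfree locus of a module. -/
def NF (M : ModuleCat.{u} R) : Set (PrimeSpectrum R) :=
  {p | ¬ Module.Free (Localization.AtPrime p.asIdeal) (LocalizedModule p.asIdeal.primeCompl M)}

/-- The infinite projective dimension locus of a module. -/
def IPD (M : ModuleCat.{u} R) : Set (PrimeSpectrum R) :=
  {p | localPdim R p M = (⊤ : WithBot ℕ∞)}

/-- The infinite projective dimension locus of a collection of modules. -/
def IPDcat (𝒳 : Set (ModuleCat.{u} R)) : Set (PrimeSpectrum R) :=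
  ⋃ M ∈ 𝒳, IPD R M

/-- The modules in `mod R` whose infinite projective dimension locus lies in `W`. -/
def IPDinv (W : Set (PrimeSpectrum R)) : Set (ModuleCat.{u} R) :=
  {M | Module.Finite R M ∧ IPD R M ⊆ W}

/-- A specialization closed subset of `Spec R`. -/
def SpecClosed (W : Set (PrimeSpectrum R)) : Prop :=
  ∀ p ∈ W, ∀ q : PrimeSpectrum R, p.asIdeal ≤ q.asIdeal → q ∈ W

/-- Membership in `add 𝒳_p`: direct summands of localizations of finite direct sums
of members of `𝒳`. -/
def memAddLocal (𝒳 : Set (ModuleCat.{u} R)) (p : PrimeSpectrum R)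
    (N : ModuleCat.{u} (Localization.AtPrime p.asIdeal)) : Prop :=
  ∃ (n : ℕ) (X : Fin n → ModuleCat.{u} R), (∀ i, X i ∈ 𝒳) ∧
    ∃ (N' : ModuleCat.{u} (Localization.AtPrime p.asIdeal)),
      Nonempty ((↥N × ↥N') ≃ₗ[Localization.AtPrime p.asIdeal]
        ((i : Fin n) → LocalizedModule p.asIdeal.primeCompl (X i)))

/-- `K` is an `n`-th syzygy of `M` computed from a minimal free resolution over the
local ring `S`. -/
def IsMinSyz (S : Type u) [CommRing S] [IsLocalRing S] :
    ℕ → ModuleCat.{u} S → ModuleCat.{u} S → Prop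
  | 0, M, K => Nonempty (K ≃ₗ[S] M)
  | n+1, M, K => ∃ (F : ModuleCat.{u} S) (g : F →ₗ[S] M) (K' : ModuleCat.{u} S)
      (i : K' →ₗ[S] F),
      Module.Finite S F ∧ Module.Free S F ∧ Function.Surjective g ∧
      (LinearMap.ker g ≤ (IsLocalRing.maximalIdeal S) • (⊤ : Submodule S F)) ∧
      Function.Injective i ∧ LinearMap.range i = LinearMap.ker g ∧
      IsMinSyz S n K' K

/-- `K` is an `n`-th syzygy of `M` in some projective resolution (over any ring). -/
def IsSyz : ℕ → ModuleCat.{u} R → ModuleCat.{u} R → Prop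
  | 0, M, K => Nonempty (K ≃ₗ[R] M)
  | n+1, M, K => ∃ (F : ModuleCat.{u} R) (g : F →ₗ[R] M) (K' : ModuleCat.{u} R)
      (i : K' →ₗ[R] F),
      Module.Finite R F ∧ Module.Projective R F ∧ Function.Surjective g ∧
      Function.Injective i ∧ LinearMap.range i = LinearMap.ker g ∧
      IsSyz n K' K

/-- `T` is (isomorphic to) the Auslander transpose of `M`, computed from a minimal
free presentation over the local ring `S`. -/
def IsTranspose (S : Type u) [CommRing S] [IsLocalRing S] (M T : ModuleCat.{u} S) : Prop :=
  ∃ (F1 F0 : ModuleCat.{u} S) (d : F1 →ₗ[S] F0) (e : F0 →ₗ[S] M),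
    Module.Finite S F0 ∧ Module.Free S F0 ∧ Module.Finite S F1 ∧ Module.Free S F1 ∧
    Function.Surjective e ∧ LinearMap.range d = LinearMap.ker e ∧
    LinearMap.ker e ≤ (IsLocalRing.maximalIdeal S) • (⊤ : Submodule S F0) ∧
    LinearMap.ker d ≤ (IsLocalRing.maximalIdeal S) • (⊤ : Submodule S F1) ∧
    Nonempty (T ≃ₗ[S] ((Module.Dual S F1) ⧸ LinearMap.range d.dualMap))

/-- `T` is (isomorphic to) `Tr Ω^n M` over the local ring `S`. -/
def IsTrOmega (S : Type u) [CommRing S] [IsLocalRing S] (n : ℕ) (M T : ModuleCat.{u} S) :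
    Prop :=
  ∃ K : ModuleCat.{u} S, IsMinSyz S n M K ∧ IsTranspose S K T

/-- Resolving subcategory `𝒳` is dominant on `W ⊆ Spec R`. -/
def DominantOn (𝒳 : Set (ModuleCat.{u} R)) (W : Set (PrimeSpectrum R)) : Prop :=
  ∀ p ∈ W, ∃ (n : ℕ) (K : ModuleCat.{u} (Localization.AtPrime p.asIdeal)),
    IsMinSyz (Localization.AtPrime p.asIdeal) n
      (ModuleCat.of (Localization.AtPrime p.asIdeal)
        (IsLocalRing.ResidueField (Localization.AtPrime p.asIdeal))) K ∧
    memAddLocal R 𝒳 p K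

/-- Dominant resolving subcategory. -/
def Dominant (𝒳 : Set (ModuleCat.{u} R)) : Prop := DominantOn R 𝒳 Set.univ

/-- A (noetherian) local ring is Cohen-Macaulay if its depth equals its Krull dimension. -/
def IsCMLocalRing (S : Type u) [CommRing S] [IsLocalRing S] : Prop :=
  IsNoetherianRing S ∧
    ((depthE S (IsLocalRing.maximalIdeal S) S : WithBot ℕ∞) = ringKrullDim S)

/-- A regular local ring: a noetherian local ring whose maximal ideal is generated by
`dim S` elements. -/
def IsRegLocalRing (S : Type u) [CommRing S] [IsLocalRing S] : Prop :=
  IsNoetherianRing S ∧ ∃ s : Finset S,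
    Ideal.span (s : Set S) = IsLocalRing.maximalIdeal S ∧
    ringKrullDim S = (s.card : WithBot ℕ∞)

/-- The singular locus of `R`. -/
def SingLocus : Set (PrimeSpectrum R) :=
  {p | ¬ IsRegLocalRing (Localization.AtPrime p.asIdeal)}

/-- A hypersurface local ring: the completion is a quotient of a regular local ring by
one element. -/
def IsHypersurfaceLocalRing (S : Type u) [CommRing S] [IsLocalRing S] : Prop :=
  ∃ (T : Type u) (_ : CommRing T) (_ : IsLocalRing T) (f : T),
    IsRegLocalRing T ∧
    Nonempty ((AdicCompletion (IsLocalRing.maximalIdeal S) S) ≃+* (T ⧸ Ideal.span {f}))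

/-- A complete intersection local ring: the completion is a quotient of a regular local
ring by a regular sequence. -/
def IsCompleteIntersectionLocalRing (S : Type u) [CommRing S] [IsLocalRing S] : Prop :=
  ∃ (T : Type u) (_ : CommRing T) (_ : IsLocalRing T) (rs : List T),
    IsRegLocalRing T ∧ RingTheory.Sequence.IsRegular T rs ∧
    Nonempty ((AdicCompletion (IsLocalRing.maximalIdeal S) S) ≃+*
      (T ⧸ Ideal.ofList rs))

/-- The subquotient `A / (A ⊓ B)` of two submodules, used for homology. -/
def subquot {S M : Type u} [CommRing S] [AddCommGroup M] [Module S M]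
    (A B : Submodule S M) : Type u :=
  A ⧸ (B.comap A.subtype)

noncomputable instance {S M : Type u} [CommRing S] [AddCommGroup M] [Module S M]
    (A B : Submodule S M) : AddCommGroup (subquot A B) :=
  inferInstanceAs (AddCommGroup (A ⧸ (B.comap A.subtype)))

noncomputable instance {S M : Type u} [CommRing S] [AddCommGroup M] [Module S M]
    (A B : Submodule S M) : Module S (subquot A B) :=
  inferInstanceAs (Module S (A ⧸ (B.comap A.subtype)))

/-- `E` is (isomorphic to) `Ext^{j+1}_S(M, S)`, computed from a finite free resolution. -/
def IsExtPos (S : Type u) [CommRing S] (j : ℕ) (M E : ModuleCat.{u} S) : Prop :=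
  ∃ (F : ℕ → ModuleCat.{u} S) (d : ∀ i : ℕ, (F (i+1) : Type u) →ₗ[S] F i)
    (e : (F 0 : Type u) →ₗ[S] M),
    (∀ i, Module.Finite S (F i)) ∧ (∀ i, Module.Free S (F i)) ∧
    Function.Surjective e ∧ LinearMap.range (d 0) = LinearMap.ker e ∧
    (∀ i, LinearMap.range (d (i+1)) = LinearMap.ker (d i)) ∧
    Nonempty (E ≃ₗ[S]
      subquot (LinearMap.ker ((d (j+1)).dualMap)) (LinearMap.range ((d j).dualMap)))

/-- `T` is (isomorphic to) `Tor_n^S(M, N)`, computed from a projective resolution of `M`. -/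
def IsTor (S : Type u) [CommRing S] (n : ℕ) (M N T : ModuleCat.{u} S) : Prop :=
  ∃ (F : ℕ → ModuleCat.{u} S) (d : ∀ i : ℕ, (F (i+1) : Type u) →ₗ[S] F i)
    (e : (F 0 : Type u) →ₗ[S] M),
    (∀ i, Module.Projective S (F i)) ∧
    Function.Surjective e ∧ LinearMap.range (d 0) = LinearMap.ker e ∧
    (∀ i, LinearMap.range (d (i+1)) = LinearMap.ker (d i)) ∧
    (match n with
      | 0 => Nonempty (T ≃ₗ[S] TensorProduct S M N)
      | (j+1) => Nonempty (T ≃ₗ[S]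
          subquot (LinearMap.ker (LinearMap.rTensor (↥N) (d j)))
            (LinearMap.range (LinearMap.rTensor (↥N) (d (j+1))))))

/-- `idLE n M` : the injective dimension of `M` is at most `n`. -/
def idLE (S : Type u) [CommRing S] : ℕ → ModuleCat.{u} S → Prop
  | 0, M => Module.Injective S M
  | n+1, M => ∃ (I C : ModuleCat.{u} S) (f : M →ₗ[S] I) (g : I →ₗ[S] C),
      IsSES f g ∧ Module.Injective S I ∧ idLE S n C

/-- `PD_0^n(R)` over a local ring: modules of projective dimension at most `n` that are
free on the punctured spectrum. -/
def PD0n [IsLocalRing R] (n : ℕ) : Set (ModuleCat.{u} R) :=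
  {M | Module.Finite R M ∧ pdLE R n M ∧
    ∀ p : PrimeSpectrum R, p.asIdeal ≠ IsLocalRing.maximalIdeal R →
      Module.Free (Localization.AtPrime p.asIdeal) (LocalizedModule p.asIdeal.primeCompl M)}

/-- `PD_0(R)` over a local ring: modules of finite projective dimension that are
free on the punctured spectrum. -/
def PD0 [IsLocalRing R] : Set (ModuleCat.{u} R) :=
  {M | Module.Finite R M ∧ (∃ n : ℕ, pdLE R n M) ∧
    ∀ p : PrimeSpectrum R, p.asIdeal ≠ IsLocalRing.maximalIdeal R →
      Module.Free (Localization.AtPrime p.asIdeal) (LocalizedModule p.asIdeal.primeCompl M)}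

/-- The residue field of a local ring, as a bundled module. -/
noncomputable abbrev residueMod (S : Type u) [CommRing S] [IsLocalRing S] : ModuleCat.{u} S :=
  ModuleCat.of S (IsLocalRing.ResidueField S)


section Calc
variable {R : Type u} [CommRing R]

lemma exists_lift_inj {A B E : Type u} [AddCommGroup A] [Module R A]
    [AddCommGroup B] [Module R B] [AddCommGroup E] [Module R E]
    (f : A →ₗ[R] B) (hf : Function.Injective f) (φ : E →ₗ[R] B)
    (h : ∀ e, φ e ∈ LinearMap.range f) : ∃ ψ : E →ₗ[R] A, ∀ e, f (ψ e) = φ e := by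
  refine ⟨(LinearEquiv.ofInjective f hf).symm.toLinearMap ∘ₗ φ.codRestrict _ h, fun e => ?_⟩
  have := LinearEquiv.apply_symm_apply (LinearEquiv.ofInjective f hf) (φ.codRestrict _ h e)
  exact congrArg Subtype.val this

lemma exists_cover (M : Type u) [AddCommGroup M] [Module R M] [Module.Finite R M] :
    ∃ (m : ℕ) (g : (Fin m → R) →ₗ[R] M), Function.Surjective g :=
  Module.Finite.exists_fin' R M

lemma ses_ker {P M : Type u} [AddCommGroup P] [Module R P]
    [AddCommGroup M] [Module R M] (g : P →ₗ[R] M) (hg : Function.Surjective g) :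
    IsSES (LinearMap.ker g).subtype g :=
  ⟨Subtype.val_injective, hg, by simp⟩

namespace IsResolving
variable {𝒳 : Set (ModuleCat.{u} R)}

lemma ret (h𝒳 : IsResolving R 𝒳) {K L : Type u} [AddCommGroup K] [Module R K]
    [AddCommGroup L] [Module R L] (i : K →ₗ[R] L) (r : L →ₗ[R] K) (h : ∀ k, r (i k) = k)
    (hL : ModuleCat.of R L ∈ 𝒳) : ModuleCat.of R K ∈ 𝒳 := by
  refine h𝒳.summand_closed (ModuleCat.of R K) (ModuleCat.of R (LinearMap.ker r)) ?_
  refine h𝒳.iso_closed (ModuleCat.of R L) _ ⟨?_⟩ hL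
  refine LinearEquiv.ofBijective (LinearMap.prod r
    ((LinearMap.id - i ∘ₗ r).codRestrict (LinearMap.ker r) (fun l => by simp [h]))) ⟨?_, ?_⟩
  · rw [← LinearMap.ker_eq_bot, LinearMap.ker_eq_bot']
    intro l hl
    have h1 : r l = 0 := congrArg Prod.fst hl
    have h2 : l - i (r l) = 0 := congrArg (fun x => (x.2 : L)) hl
    simpa [h1] using h2
  · rintro ⟨k, ⟨z, hz⟩⟩
    refine ⟨i k + z, ?_⟩
    have hz' : r z = 0 := hz
    ext
    · simp [h, hz']
    · simp [h, hz']

lemma ext' (h𝒳 : IsResolving R 𝒳) {A B C : Type u} [AddCommGroup A] [Module R A]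
    [AddCommGroup B] [Module R B] [AddCommGroup C] [Module R C]
    (f : A →ₗ[R] B) (g : B →ₗ[R] C) (h : IsSES f g) (hA : ModuleCat.of R A ∈ 𝒳)
    (hC : ModuleCat.of R C ∈ 𝒳) : ModuleCat.of R B ∈ 𝒳 :=
  h𝒳.ext_closed (ModuleCat.of R A) (ModuleCat.of R B) (ModuleCat.of R C) f g h hA hC

lemma iso' (h𝒳 : IsResolving R 𝒳) {A B : Type u} [AddCommGroup A] [Module R A]
    [AddCommGroup B] [Module R B] (e : A ≃ₗ[R] B) (hA : ModuleCat.of R A ∈ 𝒳) :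
    ModuleCat.of R B ∈ 𝒳 :=
  h𝒳.iso_closed (ModuleCat.of R A) (ModuleCat.of R B) ⟨e⟩ hA

lemma prod (h𝒳 : IsResolving R 𝒳) {A B : Type u} [AddCommGroup A] [Module R A]
    [AddCommGroup B] [Module R B] (hA : ModuleCat.of R A ∈ 𝒳)
    (hB : ModuleCat.of R B ∈ 𝒳) : ModuleCat.of R (A × B) ∈ 𝒳 := by
  refine h𝒳.ext' (LinearMap.inl R A B) (LinearMap.snd R A B)
    ⟨LinearMap.inl_injective, LinearMap.snd_surjective, ?_⟩ hA hB
  exact LinearMap.range_inl R A B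

lemma fin' (h𝒳 : IsResolving R 𝒳) {A : Type u} [AddCommGroup A] [Module R A]
    (hA : ModuleCat.of R A ∈ 𝒳) : Module.Finite R A := h𝒳.fg _ hA

lemma proj' (h𝒳 : IsResolving R 𝒳) (A : Type u) [AddCommGroup A] [Module R A]
    [Module.Finite R A] [Module.Projective R A] : ModuleCat.of R A ∈ 𝒳 :=
  h𝒳.proj_mem _ ‹_› ‹_›

lemma pi (h𝒳 : IsResolving R 𝒳) : ∀ {n : ℕ} (X : Fin n → ModuleCat.{u} R)
    (_ : ∀ i, X i ∈ 𝒳), ModuleCat.of R (∀ i, X i) ∈ 𝒳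
  | 0, X, _ => h𝒳.proj' _
  | n + 1, X, hX => by
    have h1 := h𝒳.pi (fun i : Fin n => X i.succ) (fun i => hX _)
    have h2 : ModuleCat.of R (X 0 × ∀ i : Fin n, X i.succ) ∈ 𝒳 := h𝒳.prod (hX 0) h1
    exact h𝒳.iso' (Fin.consLinearEquiv R (fun i => X i)) h2

end IsResolving

/-- Modules with a first syzygy in `𝒳`. -/
def up (𝒳 : Set (ModuleCat.{u} R)) : Set (ModuleCat.{u} R) :=
  {M | ∃ (K P : ModuleCat.{u} R) (f : K →ₗ[R] P) (g : P →ₗ[R] M),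
    IsSES f g ∧ Module.Finite R P ∧ Module.Projective R P ∧ K ∈ 𝒳}

namespace IsResolving
variable {𝒳 : Set (ModuleCat.{u} R)}

lemma ker_mem (h𝒳 : IsResolving R 𝒳) {A B C : Type u} [AddCommGroup A] [Module R A]
    [AddCommGroup B] [Module R B] [AddCommGroup C] [Module R C]
    (f : A →ₗ[R] B) (g : B →ₗ[R] C) (h : IsSES f g) (hB : ModuleCat.of R B ∈ 𝒳)
    (hC : ModuleCat.of R C ∈ up 𝒳) : ModuleCat.of R A ∈ 𝒳 := by
  obtain ⟨K, P, ι, q, ⟨hι, hq, hιq⟩, hP, hP', hK⟩ := hC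
  obtain ⟨hf, hg, hfg⟩ := h
  change P →ₗ[R] C at q
  let E : Submodule R (B × P) :=
    LinearMap.ker (g ∘ₗ LinearMap.fst R B P - q ∘ₗ LinearMap.snd R B P)
  have memE : ∀ x : B × P, x ∈ E ↔ g x.1 = q x.2 := fun x => by
    simp [E, LinearMap.mem_ker, sub_eq_zero]
  have hqι : ∀ k, q (ι k) = 0 := fun k => by
    have : ι k ∈ LinearMap.ker q := hιq ▸ LinearMap.mem_range_self ι k
    exact this
  have hgf : ∀ k, g (f k) = 0 := fun k => by
    have : f k ∈ LinearMap.ker g := hfg ▸ LinearMap.mem_range_self f k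
    exact this
  have hE : ModuleCat.of R E ∈ 𝒳 := by
    refine h𝒳.ext' (A := K) (C := B)
      ((LinearMap.inr R B P ∘ₗ ι).codRestrict E (fun k => by simp [memE, hqι]))
      (LinearMap.fst R B P ∘ₗ E.subtype) ⟨?_, ?_, ?_⟩ hK hB
    · intro a b hab
      have := congrArg (fun x : E => (x : B × P).2) hab
      exact hι this
    · intro b
      obtain ⟨p, hp⟩ := hq (g b)
      exact ⟨⟨(b, p), (memE _).2 hp.symm⟩, rfl⟩
    · ext ⟨⟨b, p⟩, hx⟩
      rw [memE] at hx
      simp only at hx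
      simp only [LinearMap.mem_range, LinearMap.mem_ker]
      constructor
      · rintro ⟨k, hk⟩
        have := congrArg (fun x : E => (x : B × P).1) hk
        exact this.symm
      · intro hb
        have hb' : b = 0 := hb
        subst hb'
        have : p ∈ LinearMap.range ι := by rw [hιq]; simpa using hx.symm
        obtain ⟨k, rfl⟩ := this
        exact ⟨k, rfl⟩
  obtain ⟨φ, hφ⟩ := Module.projective_lifting_property g q hg
  have hφ' : ∀ p, g (φ p) = q p := fun p => LinearMap.congr_fun hφ p
  obtain ⟨ψ, hψ⟩ := exists_lift_inj f hf
    ((LinearMap.fst R B P - φ ∘ₗ LinearMap.snd R B P) ∘ₗ E.subtype) (fun e => by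
      rw [hfg]
      have := (memE _).1 e.2
      simp [this, hφ'])
  refine h𝒳.ret ((LinearMap.inl R B P ∘ₗ f).codRestrict E (fun a => by simp [memE, hgf])) ψ
    (fun a => hf ?_) hE
  rw [hψ]
  change f a - φ 0 = f a
  simp

variable [IsNoetherianRing R]

lemma cok_mem (h𝒳 : IsResolving R 𝒳) {A B C : Type u} [AddCommGroup A] [Module R A]
    [AddCommGroup B] [Module R B] [AddCommGroup C] [Module R C]
    (f : A →ₗ[R] B) (g : B →ₗ[R] C) (h : IsSES f g) (hA : ModuleCat.of R A ∈ 𝒳)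
    (hB : ModuleCat.of R B ∈ 𝒳) : ModuleCat.of R C ∈ up 𝒳 := by
  obtain ⟨hf, hg, hfg⟩ := h
  have := h𝒳.fin' hB
  obtain ⟨m, π, hπ⟩ := exists_cover (R := R) B
  refine ⟨ModuleCat.of R (LinearMap.ker (g ∘ₗ π)), ModuleCat.of R (Fin m → R), _, g ∘ₗ π,
    ses_ker _ (hg.comp hπ), inferInstanceAs (Module.Finite R (Fin m → R)),
    inferInstanceAs (Module.Projective R (Fin m → R)), ?_⟩
  have hL : ModuleCat.of R (LinearMap.ker π) ∈ 𝒳 :=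
    h𝒳.syzygy_closed (ModuleCat.of R (LinearMap.ker π)) (ModuleCat.of R (Fin m → R))
      (ModuleCat.of R B) _ π (ses_ker π hπ)
      (inferInstanceAs (Module.Finite R (LinearMap.ker π)))
      (inferInstanceAs (Module.Finite R (Fin m → R)))
      (inferInstanceAs (Module.Projective R (Fin m → R))) hB
  obtain ⟨ψ, hψ⟩ := exists_lift_inj f hf (π ∘ₗ (LinearMap.ker (g ∘ₗ π)).subtype) (fun e => by
    rw [hfg]; exact e.2)
  refine h𝒳.ext' (Submodule.inclusion (p := LinearMap.ker π) (p' := LinearMap.ker (g ∘ₗ π))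
    (LinearMap.ker_le_ker_comp π g)) ψ ⟨?_, ?_, ?_⟩ hL hA
  · exact Submodule.inclusion_injective _
  · intro a
    obtain ⟨x, hx⟩ := hπ (f a)
    have hga : g (f a) = 0 := by
      have : f a ∈ LinearMap.ker g := hfg ▸ LinearMap.mem_range_self f a
      exact this
    refine ⟨⟨x, by simp [hx, hga]⟩, hf ?_⟩
    rw [hψ]; simpa using hx
  · ext ⟨x, hx⟩
    rw [Submodule.range_inclusion, LinearMap.mem_ker, ← hf.eq_iff, hψ]
    simp

lemma le_up (h𝒳 : IsResolving R 𝒳) : 𝒳 ⊆ up 𝒳 := by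
  intro M hM
  have : ModuleCat.of R (PUnit.{u+1}) ∈ 𝒳 := h𝒳.proj' _
  refine h𝒳.cok_mem (A := PUnit.{u+1}) (B := M) (C := M) 0 LinearMap.id
    ⟨?_, Function.surjective_id, ?_⟩ this hM
  · intro a b _; rfl
  · simp

lemma up_resolving (h𝒳 : IsResolving R 𝒳) : IsResolving R (up 𝒳) where
  fg := by
    rintro M ⟨K, P, f, g, ⟨-, hg, -⟩, hP, -⟩
    exact Module.Finite.of_surjective g hg
  iso_closed := by
    rintro M N ⟨e⟩ ⟨K, P, f, g, ⟨hf, hg, hfg⟩, hP, hP', hK⟩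
    refine ⟨K, P, f, e.toLinearMap ∘ₗ g, ⟨hf, e.surjective.comp hg, ?_⟩, hP, hP', hK⟩
    rw [hfg, LinearEquiv.ker_comp]
  proj_mem := fun M h1 h2 => h𝒳.le_up (h𝒳.proj_mem M h1 h2)
  summand_closed := by
    rintro M N hMN
    have hfin : Module.Finite R (M × N) := by
      obtain ⟨K, P, f, g, ⟨-, hg, -⟩, hP, -⟩ := hMN
      exact Module.Finite.of_surjective g hg
    have hM : Module.Finite R M := Module.Finite.of_surjective (LinearMap.fst R M N)
      LinearMap.fst_surjective
    have hN : Module.Finite R N := Module.Finite.of_surjective (LinearMap.snd R M N)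
      LinearMap.snd_surjective
    obtain ⟨m, π, hπ⟩ := exists_cover (R := R) M
    obtain ⟨n, ρ, hρ⟩ := exists_cover (R := R) N
    refine ⟨ModuleCat.of R (LinearMap.ker π), ModuleCat.of R (Fin m → R), _, π,
      ses_ker _ hπ, inferInstanceAs (Module.Finite R (Fin m → R)),
      inferInstanceAs (Module.Projective R (Fin m → R)), ?_⟩
    have h1 : ModuleCat.of R (LinearMap.ker π × LinearMap.ker ρ) ∈ 𝒳 := by
      refine h𝒳.ker_mem (B := (Fin m → R) × (Fin n → R)) (C := M × N)
        (LinearMap.prodMap (LinearMap.ker π).subtype (LinearMap.ker ρ).subtype)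
        (LinearMap.prodMap π ρ) ⟨?_, ?_, ?_⟩ (h𝒳.proj' _) hMN
      · exact Function.Injective.prodMap Subtype.val_injective Subtype.val_injective
      · exact Function.Surjective.prodMap hπ hρ
      · rw [LinearMap.range_prodMap, LinearMap.ker_prodMap]; simp
    exact h𝒳.summand_closed (ModuleCat.of R (LinearMap.ker π))
      (ModuleCat.of R (LinearMap.ker ρ)) h1
  ext_closed := by
    rintro A B C f g ⟨hf, hg, hfg⟩ ⟨K, P, i, π, ⟨hi, hπ, hiπ⟩, hP, hP', hK⟩
      ⟨L, Q, j, ρ, ⟨hj, hρ, hjρ⟩, hQ, hQ', hL⟩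
    obtain ⟨φ, hφ⟩ := Module.projective_lifting_property g ρ hg
    have hφ' : ∀ p, g (φ p) = ρ p := fun p => LinearMap.congr_fun hφ p
    have hgf : ∀ k, g (f k) = 0 := fun k => by
      have : f k ∈ LinearMap.ker g := hfg ▸ LinearMap.mem_range_self f k
      exact this
    have hπi : ∀ k, π (i k) = 0 := fun k => by
      have : i k ∈ LinearMap.ker π := hiπ ▸ LinearMap.mem_range_self i k
      exact this
    have hρj : ∀ k, ρ (j k) = 0 := fun k => by
      have : j k ∈ LinearMap.ker ρ := hjρ ▸ LinearMap.mem_range_self j k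
      exact this
    let τ : P × Q →ₗ[R] B := LinearMap.coprod (f ∘ₗ π) φ
    have hτ : ∀ x, τ x = f (π x.1) + φ x.2 := fun x => rfl
    have hτs : Function.Surjective τ := by
      intro b
      obtain ⟨q, hq⟩ := hρ (g b)
      have : b - φ q ∈ LinearMap.range f := by rw [hfg]; simp [hφ', hq]
      obtain ⟨a, ha⟩ := this
      obtain ⟨p, rfl⟩ := hπ a
      exact ⟨(p, q), by rw [hτ]; simp [ha]⟩
    refine ⟨ModuleCat.of R (LinearMap.ker τ), ModuleCat.of R (P × Q), _, τ,
      ses_ker τ hτs, inferInstanceAs (Module.Finite R (P × Q)),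
      inferInstanceAs (Module.Projective R (P × Q)), ?_⟩
    have key : ∀ x : LinearMap.ker τ, ρ x.1.2 = 0 := fun x => by
      have h1 : f (π x.1.1) + φ x.1.2 = 0 := x.2
      have h2 := congrArg g h1
      simpa [hgf, hφ'] using h2
    obtain ⟨ψ, hψ⟩ := exists_lift_inj j hj (LinearMap.snd R P Q ∘ₗ (LinearMap.ker τ).subtype)
      (fun e => by rw [hjρ]; exact key e)
    refine h𝒳.ext' (A := K) (C := L)
      ((LinearMap.inl R P Q ∘ₗ i).codRestrict (LinearMap.ker τ) (fun k => by
        rw [LinearMap.mem_ker, hτ]; simp [hπi])) ψ ⟨?_, ?_, ?_⟩ hK hL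
    · intro a b hab
      exact hi (congrArg (fun x : LinearMap.ker τ => (x : P × Q).1) hab)
    · intro l
      have : φ (j l) ∈ LinearMap.range f := by rw [hfg]; simp [hφ', hρj]
      obtain ⟨a, ha⟩ := this
      obtain ⟨p, rfl⟩ := hπ a
      refine ⟨⟨(-p, j l), by rw [LinearMap.mem_ker, hτ]; simp [ha]⟩, hj ?_⟩
      rw [hψ]; rfl
    · ext ⟨⟨p, q⟩, hx⟩
      have hψ0 : ∀ e, e ∈ LinearMap.ker ψ ↔ e.1.2 = 0 := fun e => by
        rw [LinearMap.mem_ker, ← hj.eq_iff, hψ, j.map_zero]; rfl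
      rw [hψ0, LinearMap.mem_range]
      rw [LinearMap.mem_ker, hτ] at hx
      simp only at hx
      constructor
      · rintro ⟨k, hk⟩
        exact (congrArg (fun x : LinearMap.ker τ => (x : P × Q).2) hk).symm
      · intro hq
        have hq' : q = 0 := hq
        subst hq'
        have hp : p ∈ LinearMap.range i := by
          rw [hiπ, LinearMap.mem_ker]
          apply hf
          simpa using hx
        obtain ⟨k, rfl⟩ := hp
        exact ⟨k, rfl⟩
  syzygy_closed := by
    intro K P M f g h _ hP hP' hM
    exact h𝒳.le_up (h𝒳.ker_mem f g h (h𝒳.proj_mem _ hP hP') hM)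

end IsResolving

/-- Iterated `up`. -/
def upn (𝒳 : Set (ModuleCat.{u} R)) : ℕ → Set (ModuleCat.{u} R)
  | 0 => 𝒳
  | n + 1 => up (upn 𝒳 n)

lemma upn_resolving [IsNoetherianRing R] {𝒳 : Set (ModuleCat.{u} R)} (h𝒳 : IsResolving R 𝒳) :
    ∀ n, IsResolving R (upn 𝒳 n)
  | 0 => h𝒳
  | n + 1 => (upn_resolving h𝒳 n).up_resolving

lemma upn_mono [IsNoetherianRing R] {𝒳 : Set (ModuleCat.{u} R)} (h𝒳 : IsResolving R 𝒳)
    {m n : ℕ} (h : m ≤ n) : upn 𝒳 m ⊆ upn 𝒳 n := by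
  induction h with
  | refl => exact subset_rfl
  | step _ ih => exact ih.trans (upn_resolving h𝒳 _).le_up

lemma mem_upn_of_isSyz [IsNoetherianRing R] {𝒳 : Set (ModuleCat.{u} R)}
    (h𝒳 : IsResolving R 𝒳) (k : ℕ) :
    ∀ (n : ℕ) (M K : ModuleCat.{u} R), IsSyz R n M K → K ∈ upn 𝒳 k → M ∈ upn 𝒳 (k + n)
  | 0, M, K, ⟨e⟩, hK => (upn_resolving h𝒳 k).iso_closed K M ⟨e⟩ hK
  | n + 1, M, K, ⟨F, g, K', i, h1, h2, h3, h4, h5, h6⟩, hK =>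
    ⟨K', F, i, g, ⟨h4, h3, h5⟩, h1, h2, mem_upn_of_isSyz h𝒳 k n K' K h6 hK⟩

lemma exists_isSyz_of_mem_upn {𝒳 : Set (ModuleCat.{u} R)} :
    ∀ (n : ℕ) (M : ModuleCat.{u} R), M ∈ upn 𝒳 n → ∃ K, IsSyz R n M K ∧ K ∈ 𝒳
  | 0, M, h => ⟨M, ⟨LinearEquiv.refl R M⟩, h⟩
  | n + 1, M, ⟨K, P, f, g, ⟨h1, h2, h3⟩, h4, h5, h6⟩ => by
    obtain ⟨K', hK', h⟩ := exists_isSyz_of_mem_upn n K h6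
    exact ⟨K', ⟨P, g, K, f, h4, h5, h2, h1, h3, hK'⟩, h⟩

/-- Modules with some syzygy in `𝒳`. -/
def upInf (𝒳 : Set (ModuleCat.{u} R)) : Set (ModuleCat.{u} R) := {M | ∃ n, M ∈ upn 𝒳 n}

lemma upInf_resolving [IsNoetherianRing R] {𝒳 : Set (ModuleCat.{u} R)} (h𝒳 : IsResolving R 𝒳) :
    IsResolving R (upInf 𝒳) where
  fg := fun M ⟨n, h⟩ => (upn_resolving h𝒳 n).fg M h
  iso_closed := fun M N e ⟨n, h⟩ => ⟨n, (upn_resolving h𝒳 n).iso_closed M N e h⟩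
  proj_mem := fun M h1 h2 => ⟨0, h𝒳.proj_mem M h1 h2⟩
  summand_closed := fun M N ⟨n, h⟩ => ⟨n, (upn_resolving h𝒳 n).summand_closed M N h⟩
  ext_closed := fun A B C f g h ⟨n, hA⟩ ⟨m, hC⟩ => ⟨max n m,
    (upn_resolving h𝒳 _).ext_closed A B C f g h (upn_mono h𝒳 (le_max_left _ _) hA)
      (upn_mono h𝒳 (le_max_right _ _) hC)⟩
  syzygy_closed := fun K P M f g h h1 h2 h3 ⟨n, hM⟩ =>
    ⟨n, (upn_resolving h𝒳 n).syzygy_closed K P M f g h h1 h2 h3 hM⟩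

lemma upInf_up [IsNoetherianRing R] {𝒳 : Set (ModuleCat.{u} R)} :
    up (upInf 𝒳) ⊆ upInf 𝒳 := fun _ ⟨K, P, f, g, h1, h2, h3, ⟨n, hn⟩⟩ =>
  ⟨n + 1, K, P, f, g, h1, h2, h3, hn⟩

/-- Membership from a prime filtration. -/
lemma mem_of_primes [IsNoetherianRing R] {𝒴 : Set (ModuleCat.{u} R)} (h𝒴 : IsResolving R 𝒴)
    (I : Ideal R) (hI : ∀ q : PrimeSpectrum R, I ≤ q.asIdeal →
      ModuleCat.of R (R ⧸ q.asIdeal) ∈ 𝒴)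
    (M : Type u) [AddCommGroup M] [Module R M] [hM : Module.Finite R M]
    (h : ∀ r ∈ I, ∀ m : M, r • m = 0) : ModuleCat.of R M ∈ 𝒴 := by
  revert h
  induction hM using IsNoetherianRing.induction_on_isQuotientEquivQuotientPrime R with
  | subsingleton N =>
    intro _
    exact h𝒴.proj' N
  | quotient N p e =>
    intro h
    refine h𝒴.iso' e.symm (hI p ?_)
    intro r hr
    have := h r hr (e.symm (Ideal.Quotient.mk _ 1))
    rw [← map_smul, e.symm.map_eq_zero_iff] at this
    rw [← Ideal.Quotient.eq_zero_iff_mem]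
    rw [← this]
    change _ = Ideal.Quotient.mk p.asIdeal (r • 1)
    simp
  | exact N₁ N₂ N₃ f g hf hg hfg h1 h3 =>
    intro h
    refine h𝒴.ext' f g ⟨hf, hg, (LinearMap.exact_iff.1 hfg).symm⟩ (h1 ?_) (h3 ?_)
    · intro r hr m
      apply hf
      rw [map_smul, h r hr, map_zero]
    · intro r hr m
      obtain ⟨n, rfl⟩ := hg m
      rw [← map_smul, h r hr, map_zero]

end Calc

section Stab
variable {S : Type u} [CommRing S]

/-- `K` is a retract of `L` up to a finite free module. -/
def StabRet (K L : Type u) [AddCommGroup K] [Module S K] [AddCommGroup L] [Module S L] : Prop :=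
  ∃ (m : ℕ) (i : K →ₗ[S] L × (Fin m → S)) (r : L × (Fin m → S) →ₗ[S] K), ∀ k, r (i k) = k

lemma StabRet.refl (K : Type u) [AddCommGroup K] [Module S K] : StabRet (S := S) K K :=
  ⟨0, LinearMap.inl _ _ _, LinearMap.fst _ _ _, fun _ => rfl⟩

lemma exists_free_ret (F : Type u) [AddCommGroup F] [Module S F] [Module.Finite S F]
    [Module.Projective S F] : ∃ (m : ℕ) (i : F →ₗ[S] (Fin m → S)) (r : (Fin m → S) →ₗ[S] F),
      ∀ k, r (i k) = k := by
  obtain ⟨m, π, hπ⟩ := exists_cover (R := S) F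
  obtain ⟨σ, hσ⟩ := Module.projective_lifting_property π LinearMap.id hπ
  exact ⟨m, σ, π, fun k => LinearMap.congr_fun hσ k⟩

lemma StabRet.of_proj {K L F : Type u} [AddCommGroup K] [Module S K] [AddCommGroup L] [Module S L]
    [AddCommGroup F] [Module S F] [Module.Finite S F] [Module.Projective S F]
    (i : K →ₗ[S] L × F) (r : L × F →ₗ[S] K) (h : ∀ k, r (i k) = k) : StabRet (S := S) K L := by
  obtain ⟨m, a, b, hab⟩ := exists_free_ret (S := S) F
  refine ⟨m, LinearMap.prodMap LinearMap.id a ∘ₗ i, r ∘ₗ LinearMap.prodMap LinearMap.id b,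
    fun k => ?_⟩
  simp [hab, h]

lemma StabRet.congr {K L K' L' : Type u} [AddCommGroup K] [Module S K] [AddCommGroup L] [Module S L]
    [AddCommGroup K'] [Module S K'] [AddCommGroup L'] [Module S L']
    (e : K' ≃ₗ[S] K) (f : L' ≃ₗ[S] L) (h : StabRet (S := S) K L) : StabRet (S := S) K' L' := by
  obtain ⟨m, i, r, h⟩ := h
  refine ⟨m, LinearMap.prodMap f.symm.toLinearMap LinearMap.id ∘ₗ i ∘ₗ e.toLinearMap,
    e.symm.toLinearMap ∘ₗ r ∘ₗ LinearMap.prodMap f.toLinearMap LinearMap.id, fun k => ?_⟩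
  simp [h]

lemma StabRet.ker {K F M L Q N : Type u} [AddCommGroup K] [Module S K] [AddCommGroup L] [Module S L]
    [AddCommGroup F] [Module S F] [Module.Finite S F] [Module.Projective S F]
    [AddCommGroup Q] [Module S Q] [Module.Projective S Q]
    [AddCommGroup M] [Module S M] [AddCommGroup N] [Module S N]
    (ι : K →ₗ[S] F) (g : F →ₗ[S] M) (j : L →ₗ[S] Q) (h : Q →ₗ[S] N)
    (h1 : IsSES ι g) (h2 : IsSES j h) (hMN : StabRet (S := S) M N) : StabRet (S := S) K L := by
  obtain ⟨m, i, r, hri⟩ := hMN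
  obtain ⟨hι, hg, hιg⟩ := h1
  obtain ⟨hj, hh, hjh⟩ := h2
  have hgι : ∀ k, g (ι k) = 0 := fun k => by
    have : ι k ∈ LinearMap.ker g := hιg ▸ LinearMap.mem_range_self ι k
    exact this
  have hhj : ∀ k, h (j k) = 0 := fun k => by
    have : j k ∈ LinearMap.ker h := hjh ▸ LinearMap.mem_range_self j k
    exact this
  let H : Q × (Fin m → S) →ₗ[S] N × (Fin m → S) := LinearMap.prodMap h LinearMap.id
  have hH : Function.Surjective H := Function.Surjective.prodMap hh Function.surjective_id
  obtain ⟨a, ha⟩ := Module.projective_lifting_property H (i ∘ₗ g) hH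
  obtain ⟨b, hb⟩ := Module.projective_lifting_property g (r ∘ₗ H) hg
  have ha' : ∀ x, H (a x) = i (g x) := fun x => LinearMap.congr_fun ha x
  have hb' : ∀ x, g (b x) = r (H x) := fun x => LinearMap.congr_fun hb x
  obtain ⟨θ, hθ⟩ := exists_lift_inj ι hι (LinearMap.id - b ∘ₗ a) (fun x => by
    rw [hιg, LinearMap.mem_ker]; simp [hb', ha', hri])
  have hak : ∀ k, H (a (ι k)) = 0 := fun k => by rw [ha', hgι, map_zero]
  have hak1 : ∀ k, h (a (ι k)).1 = 0 := fun k => congrArg Prod.fst (hak k)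
  have hak2 : ∀ k, (a (ι k)).2 = 0 := fun k => congrArg Prod.snd (hak k)
  obtain ⟨α, hα⟩ := exists_lift_inj j hj (LinearMap.fst S Q (Fin m → S) ∘ₗ a ∘ₗ ι) (fun x => by
    rw [hjh]; exact hak1 x)
  obtain ⟨β, hβ⟩ := exists_lift_inj ι hι (b ∘ₗ LinearMap.inl S Q (Fin m → S) ∘ₗ j) (fun x => by
    rw [hιg, LinearMap.mem_ker]
    have : H (j x, 0) = 0 := by simp [H, hhj]
    simp [hb', this])
  refine StabRet.of_proj (F := F) (LinearMap.prod α ι) (LinearMap.coprod β θ) (fun k => hι ?_)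
  have h3 : a (ι k) = (j (α k), 0) := Prod.ext (hα k).symm (hak2 k)
  have : ι (β (α k)) + ι (θ (ι k)) = ι k := by
    rw [hθ, hβ]
    simp [h3]
  simpa using this

lemma stabRet_of_isSyz : ∀ (n : ℕ) (M N K L : ModuleCat.{u} S), IsSyz S n M K → IsSyz S n N L →
    StabRet (S := S) M N → StabRet (S := S) K L
  | 0, _, _, _, _, ⟨e⟩, ⟨f⟩, h => h.congr e f
  | n + 1, M, N, K, L, ⟨F, g, K', i, h1, h2, h3, h4, h5, h6⟩,
      ⟨F', g', L', i', h1', h2', h3', h4', h5', h6'⟩, h =>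
    stabRet_of_isSyz n K' L' K L h6 h6'
      (StabRet.ker i g i' g' ⟨h4, h3, h5⟩ ⟨h4', h3', h5'⟩ h)

/-- Multiplication by `t` factors through a finite projective module. -/
def Fac (t : S) (M : Type u) [AddCommGroup M] [Module S M] : Prop :=
  ∃ (F : ModuleCat.{u} S) (a : M →ₗ[S] F) (b : F →ₗ[S] M), Module.Finite S F ∧
    Module.Projective S F ∧ ∀ x, b (a x) = t • x

lemma Fac.ker {t : S} {K F M : Type u} [AddCommGroup K] [Module S K]
    [AddCommGroup F] [Module S F] [Module.Finite S F] [Module.Projective S F]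
    [AddCommGroup M] [Module S M] (ι : K →ₗ[S] F) (g : F →ₗ[S] M) (h1 : IsSES ι g)
    (hM : Fac t M) : Fac t K := by
  obtain ⟨G, a, b, hG, hG', hab⟩ := hM
  obtain ⟨hι, hg, hιg⟩ := h1
  have hgι : ∀ k, g (ι k) = 0 := fun k => by
    have : ι k ∈ LinearMap.ker g := hιg ▸ LinearMap.mem_range_self ι k
    exact this
  obtain ⟨c, hc⟩ := Module.projective_lifting_property g b hg
  have hc' : ∀ x, g (c x) = b x := fun x => LinearMap.congr_fun hc x
  obtain ⟨θ, hθ⟩ := exists_lift_inj ι hι (t • LinearMap.id - c ∘ₗ a ∘ₗ g) (fun x => by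
    rw [hιg, LinearMap.mem_ker]; simp [hc', hab])
  refine ⟨ModuleCat.of S F, ι, θ, ‹_›, ‹_›, fun x => hι ?_⟩
  rw [hθ]
  simp [hgι]

lemma fac_of_isSyz (t : S) : ∀ (n : ℕ) (M K : ModuleCat.{u} S), IsSyz S n M K → Fac t M → Fac t K
  | 0, _, _, ⟨e⟩, ⟨G, a, b, hG, hG', hab⟩ => ⟨G, a ∘ₗ e.toLinearMap, e.symm.toLinearMap ∘ₗ b,
      hG, hG', fun x => by simp [hab]⟩
  | n + 1, _, K, ⟨_, g, K', i, _, _, h3, h4, h5, h6⟩, h =>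
      fac_of_isSyz t n K' K h6 (Fac.ker i g ⟨h4, h3, h5⟩ h)

lemma isSyz_finite [IsNoetherianRing S] : ∀ (n : ℕ) (M K : ModuleCat.{u} S), IsSyz S n M K →
    Module.Finite S M → Module.Finite S K
  | 0, _, _, ⟨e⟩, _ => Module.Finite.equiv e.symm
  | n + 1, _, K, ⟨_, _, K', i, _, _, _, h4, _, h6⟩, _ =>
      isSyz_finite n K' K h6 (Module.Finite.of_injective i h4)

lemma exists_isSyz [IsNoetherianRing S] : ∀ (n : ℕ) (M : ModuleCat.{u} S),
    Module.Finite S M → ∃ K, IsSyz S n M K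
  | 0, M, _ => ⟨M, ⟨LinearEquiv.refl _ _⟩⟩
  | n + 1, M, _ => by
    obtain ⟨m, g, hg⟩ := exists_cover (R := S) M
    obtain ⟨K, hK⟩ := exists_isSyz n (ModuleCat.of S (LinearMap.ker g))
      (inferInstanceAs (Module.Finite S (LinearMap.ker g)))
    exact ⟨K, ModuleCat.of S (Fin m → S), g, _, (LinearMap.ker g).subtype,
      inferInstanceAs (Module.Finite S (Fin m → S)),
      inferInstanceAs (Module.Projective S (Fin m → S)), hg, Subtype.val_injective, by simp, hK⟩

variable [IsLocalRing S]

lemma IsMinSyz.isSyz : ∀ (n : ℕ) (M K : ModuleCat.{u} S), IsMinSyz S n M K → IsSyz S n M K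
  | 0, _, _, h => h
  | n + 1, _, K, ⟨F, g, K', i, h1, _, h3, _, h4, h5, h6⟩ =>
      ⟨F, g, K', i, h1, Module.Projective.of_free, h3, h4, h5, IsMinSyz.isSyz n K' K h6⟩

lemma exists_min_cover (M : Type u) [AddCommGroup M] [Module S M] [Module.Finite S M] :
    ∃ (m : ℕ) (g : (Fin m → S) →ₗ[S] M), Function.Surjective g ∧
      LinearMap.ker g ≤ (IsLocalRing.maximalIdeal S) • (⊤ : Submodule S (Fin m → S)) := by
  classical
  have hex : ∃ (m : ℕ) (v : Fin m → M), Submodule.span S (Set.range v) = ⊤ := by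
    obtain ⟨m, v, hv⟩ := Module.Finite.exists_fin (R := S) (M := M)
    exact ⟨m, v, hv⟩
  obtain ⟨v, hv⟩ := Nat.find_spec hex
  have hmin := fun k => Nat.find_min hex (m := k)
  generalize Nat.find hex = m at v hv hmin
  refine ⟨m, Fintype.linearCombination S v, ?_, ?_⟩
  · rw [← LinearMap.range_eq_top, Fintype.range_linearCombination, hv]
  · intro x hx
    by_contra hcon
    have : ∃ j, x j ∉ IsLocalRing.maximalIdeal S := by
      by_contra hall
      push Not at hall
      apply hcon
      rw [pi_eq_sum_univ' x]
      refine Submodule.sum_mem _ fun i _ => Submodule.smul_mem_smul (hall i) trivial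
    obtain ⟨j, hj⟩ := this
    have hu : IsUnit (x j) := by simpa using hj
    obtain _ | k := m
    · exact j.elim0
    apply hmin k (Nat.lt_succ_self k)
    refine ⟨v ∘ j.succAbove, ?_⟩
    rw [eq_top_iff, ← hv, Submodule.span_le]
    rintro _ ⟨i, rfl⟩
    have hsub : ∀ i, v (j.succAbove i) ∈ Submodule.span S (Set.range (v ∘ j.succAbove)) :=
      fun i => Submodule.subset_span ⟨i, rfl⟩
    rcases Fin.eq_self_or_eq_succAbove j i with rfl | ⟨i, rfl⟩
    · rw [LinearMap.mem_ker, Fintype.linearCombination_apply, Fin.sum_univ_succAbove _ i] at hx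
      have h2 : x i • v i ∈ Submodule.span S (Set.range (v ∘ i.succAbove)) := by
        rw [eq_neg_of_add_eq_zero_left hx]
        exact Submodule.neg_mem _ (Submodule.sum_mem _ fun t _ => Submodule.smul_mem _ _ (hsub t))
      obtain ⟨w, hw⟩ := hu
      have := Submodule.smul_mem _ (↑(w⁻¹) : S) h2
      rw [← hw, smul_smul] at this
      simpa using this
    · exact hsub i

lemma exists_isMinSyz [IsNoetherianRing S] : ∀ (n : ℕ) (M : ModuleCat.{u} S),
    Module.Finite S M → ∃ K, IsMinSyz S n M K
  | 0, M, _ => ⟨M, ⟨LinearEquiv.refl _ _⟩⟩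
  | n + 1, M, _ => by
    obtain ⟨m, g, hg, hm⟩ := exists_min_cover (S := S) M
    obtain ⟨K, hK⟩ := exists_isMinSyz n (ModuleCat.of S (LinearMap.ker g))
      (inferInstanceAs (Module.Finite S (LinearMap.ker g)))
    exact ⟨K, ModuleCat.of S (Fin m → S), g, _, (LinearMap.ker g).subtype,
      inferInstanceAs (Module.Finite S (Fin m → S)),
      inferInstanceAs (Module.Free S (Fin m → S)), hg, hm, Subtype.val_injective, by simp, hK⟩

end Stab

section Loc
variable {R : Type u} [CommRing R]

lemma projective_localized (p : PrimeSpectrum R) (M : Type u) [AddCommGroup M] [Module R M]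
    [Module.Projective R M] : Module.Projective (Localization.AtPrime p.asIdeal)
      (LocalizedModule p.asIdeal.primeCompl M) :=
  Module.Projective.of_equiv (IsLocalizedModule.isBaseChange p.asIdeal.primeCompl
    (Localization.AtPrime p.asIdeal)
    (LocalizedModule.mkLinearMap p.asIdeal.primeCompl M)).equiv

lemma isSyz_localize (p : PrimeSpectrum R) : ∀ (n : ℕ) (M K : ModuleCat.{u} R), IsSyz R n M K →
    IsSyz (Localization.AtPrime p.asIdeal) n (localizeM R p M) (localizeM R p K)
  | 0, _, _, ⟨e⟩ => ⟨IsLocalizedModule.mapEquiv p.asIdeal.primeCompl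
      (LocalizedModule.mkLinearMap p.asIdeal.primeCompl _)
      (LocalizedModule.mkLinearMap p.asIdeal.primeCompl _) (Localization.AtPrime p.asIdeal) e⟩
  | n + 1, _, K, ⟨F, g, K', i, h1, h2, h3, h4, h5, h6⟩ =>
    ⟨localizeM R p F, LocalizedModule.map p.asIdeal.primeCompl g, localizeM R p K',
      LocalizedModule.map p.asIdeal.primeCompl i,
      Module.Finite.of_isLocalizedModule p.asIdeal.primeCompl
        (LocalizedModule.mkLinearMap p.asIdeal.primeCompl F),
      projective_localized p F,
      LocalizedModule.map_surjective _ g h3, LocalizedModule.map_injective _ i h4,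
      (LinearMap.exact_iff.1 (show Function.Exact (LocalizedModule.map p.asIdeal.primeCompl i)
        (LocalizedModule.map p.asIdeal.primeCompl g) from
        LocalizedModule.map_exact p.asIdeal.primeCompl i g
        (LinearMap.exact_iff.2 h5.symm))).symm,
      isSyz_localize p n K' K h6⟩

lemma residue_equiv (p : PrimeSpectrum R) :
    Nonempty (LocalizedModule p.asIdeal.primeCompl (R ⧸ p.asIdeal)
      ≃ₗ[Localization.AtPrime p.asIdeal]
      IsLocalRing.ResidueField (Localization.AtPrime p.asIdeal)) := by
  have h : Submodule.localized' (Localization.AtPrime p.asIdeal) p.asIdeal.primeCompl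
      (Algebra.linearMap R (Localization.AtPrime p.asIdeal)) p.asIdeal =
      IsLocalRing.maximalIdeal (Localization.AtPrime p.asIdeal) := by
    rw [Submodule.localized'_eq_span, ← Localization.AtPrime.map_eq_maximalIdeal]
    rfl
  let e := (IsLocalizedModule.iso p.asIdeal.primeCompl (Submodule.toLocalizedQuotient'
    (Localization.AtPrime p.asIdeal) p.asIdeal.primeCompl
      (Algebra.linearMap R (Localization.AtPrime p.asIdeal)) p.asIdeal))
  exact ⟨(e.extendScalarsOfIsLocalization p.asIdeal.primeCompl
    (Localization.AtPrime p.asIdeal)).trans (Submodule.quotEquivOfEq _ _ h)⟩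

lemma localizedRing_equiv (p : PrimeSpectrum R) :
    Nonempty (LocalizedModule p.asIdeal.primeCompl R ≃ₗ[Localization.AtPrime p.asIdeal]
      Localization.AtPrime p.asIdeal) :=
  ⟨(IsLocalizedModule.iso p.asIdeal.primeCompl (Algebra.linearMap R
    (Localization.AtPrime p.asIdeal))).extendScalarsOfIsLocalization p.asIdeal.primeCompl
    (Localization.AtPrime p.asIdeal)⟩

lemma ret_equiv {S : Type u} [CommRing S] {K L : Type u} [AddCommGroup K] [Module S K]
    [AddCommGroup L] [Module S L] (i : K →ₗ[S] L) (r : L →ₗ[S] K) (h : ∀ k, r (i k) = k) :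
    Nonempty ((K × LinearMap.ker r) ≃ₗ[S] L) := by
  refine ⟨LinearEquiv.symm (LinearEquiv.ofBijective (LinearMap.prod r
    ((LinearMap.id - i ∘ₗ r).codRestrict (LinearMap.ker r) (fun l => by simp [h]))) ⟨?_, ?_⟩)⟩
  · rw [← LinearMap.ker_eq_bot, LinearMap.ker_eq_bot']
    intro l hl
    have h1 : r l = 0 := congrArg Prod.fst hl
    have h2 : l - i (r l) = 0 := congrArg (fun x => (x.2 : L)) hl
    simpa [h1] using h2
  · rintro ⟨k, ⟨z, hz⟩⟩
    refine ⟨i k + z, ?_⟩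
    have hz' : r z = 0 := hz
    ext
    · simp [h, hz']
    · simp [h, hz']

lemma memAddLocal_of_stabRet (p : PrimeSpectrum R) {𝒳 : Set (ModuleCat.{u} R)}
    (h𝒳 : IsResolving R 𝒳) (K : ModuleCat.{u} R) (hK : K ∈ 𝒳)
    (N : ModuleCat.{u} (Localization.AtPrime p.asIdeal))
    (h : StabRet (S := Localization.AtPrime p.asIdeal) N (localizeM R p K)) :
    memAddLocal R 𝒳 p N := by
  obtain ⟨m, i, r, hir⟩ := h
  obtain ⟨ε⟩ := localizedRing_equiv p
  let X : Fin (m + 1) → ModuleCat.{u} R := Fin.cons K (fun _ => ModuleCat.of R R)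
  let e1 : (LocalizedModule p.asIdeal.primeCompl K × (Fin m → Localization.AtPrime p.asIdeal))
      ≃ₗ[Localization.AtPrime p.asIdeal] (LocalizedModule p.asIdeal.primeCompl (X 0) ×
        ((j : Fin m) → LocalizedModule p.asIdeal.primeCompl (X j.succ))) :=
    LinearEquiv.prodCongr (LinearEquiv.refl _ _) (LinearEquiv.piCongrRight fun _ => ε.symm)
  let e := e1.trans (Fin.consLinearEquiv (Localization.AtPrime p.asIdeal)
    (fun j => LocalizedModule p.asIdeal.primeCompl (X j)))
  obtain ⟨w⟩ := ret_equiv (e.toLinearMap ∘ₗ i) (r ∘ₗ e.symm.toLinearMap) (fun k => by simp [hir])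
  refine ⟨m + 1, X, ?_, ModuleCat.of _ (LinearMap.ker (r ∘ₗ e.symm.toLinearMap)), ⟨w⟩⟩
  intro j
  refine Fin.cases ?_ (fun j => ?_) j
  · exact hK
  · exact h𝒳.proj_mem (ModuleCat.of R R) (inferInstanceAs (Module.Finite R R))
      (inferInstanceAs (Module.Projective R R))

/-- (2) implies (1). -/
lemma dominant_of_syzygies [IsNoetherianRing R] {𝒳 : Set (ModuleCat.{u} R)}
    (h𝒳 : IsResolving R 𝒳)
    (h : ∀ p : PrimeSpectrum R, ∃ (n : ℕ) (K : ModuleCat.{u} R),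
      IsSyz R n (ModuleCat.of R (R ⧸ p.asIdeal)) K ∧ K ∈ 𝒳) : Dominant R 𝒳 := by
  intro p _
  obtain ⟨n, K, hK, hKX⟩ := h p
  have : IsNoetherianRing (Localization.AtPrime p.asIdeal) :=
    IsLocalization.isNoetherianRing p.asIdeal.primeCompl _ inferInstance
  obtain ⟨N, hN⟩ := exists_isMinSyz n (ModuleCat.of (Localization.AtPrime p.asIdeal)
        (IsLocalRing.ResidueField (Localization.AtPrime p.asIdeal)))
        (inferInstanceAs (Module.Finite (Localization.AtPrime p.asIdeal)
        (IsLocalRing.ResidueField (Localization.AtPrime p.asIdeal))))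
  refine ⟨n, N, hN, memAddLocal_of_stabRet p h𝒳 K hKX N ?_⟩
  refine stabRet_of_isSyz n _ _ _ _ (IsMinSyz.isSyz n _ _ hN) (isSyz_localize p n _ _ hK) ?_
  obtain ⟨e⟩ := residue_equiv p
  exact (StabRet.refl _).congr (LinearEquiv.refl _ _) e

lemma descend [IsNoetherianRing R] (p : PrimeSpectrum R) {A X W : Type u}
    [AddCommGroup A] [Module R A]
    [AddCommGroup X] [Module R X] [AddCommGroup W] [Module R W] [Module.Finite R A]
    [Module.Finite R X] (φ : X →ₗ[R] W) [IsLocalizedModule p.asIdeal.primeCompl φ]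
    (i : LocalizedModule p.asIdeal.primeCompl A →ₗ[R] W)
    (r : W →ₗ[R] LocalizedModule p.asIdeal.primeCompl A) (h : ∀ k, r (i k) = k) :
    ∃ (f : A →ₗ[R] X) (g : X →ₗ[R] A) (s : R), s ∉ p.asIdeal ∧ ∀ a, g (f a) = s • a := by
  have : Module.FinitePresentation R A := Module.finitePresentation_of_finite R A
  have : Module.FinitePresentation R X := Module.finitePresentation_of_finite R X
  let mk := LocalizedModule.mkLinearMap p.asIdeal.primeCompl A
  obtain ⟨f, s1, hf⟩ := Module.FinitePresentation.exists_lift_of_isLocalizedModule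
    p.asIdeal.primeCompl φ (i ∘ₗ mk)
  obtain ⟨g, s2, hg⟩ := Module.FinitePresentation.exists_lift_of_isLocalizedModule
    p.asIdeal.primeCompl mk (r ∘ₗ φ)
  have hf' : ∀ a, φ (f a) = (s1 : R) • i (mk a) := fun a => LinearMap.congr_fun hf a
  have hg' : ∀ a, mk (g a) = (s2 : R) • r (φ a) := fun a => LinearMap.congr_fun hg a
  obtain ⟨s3, hs3⟩ := Module.Finite.exists_smul_of_comp_eq_of_isLocalizedModule
    p.asIdeal.primeCompl mk (g ∘ₗ f) (((s2 : R) * s1) • LinearMap.id) (by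
      ext a
      simp [hg', hf', h, mul_smul])
  refine ⟨f, (s3 : R) • g, s3 * (s2 * s1), (s3 * (s2 * s1)).2, fun a => ?_⟩
  have := LinearMap.congr_fun hs3 a
  rw [mul_smul]
  exact this

/-- Dominance, descended to `R`. -/
lemma exists_factor [IsNoetherianRing R] {𝒳 : Set (ModuleCat.{u} R)}
    (h𝒳 : IsResolving R 𝒳) (hD : Dominant R 𝒳) (p : PrimeSpectrum R) :
    ∃ (n : ℕ) (A : ModuleCat.{u} R), IsSyz R n (ModuleCat.of R (R ⧸ p.asIdeal)) A ∧
      ∃ (X : ModuleCat.{u} R) (f : A →ₗ[R] X) (g : X →ₗ[R] A) (s : R), X ∈ 𝒳 ∧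
        s ∉ p.asIdeal ∧ ∀ a, g (f a) = s • a := by
  obtain ⟨n, K, hK, l, X, hX, N', ⟨e⟩⟩ := hD p trivial
  have hfin : Module.Finite R (ModuleCat.of R (R ⧸ p.asIdeal)) :=
    inferInstanceAs (Module.Finite R (R ⧸ p.asIdeal))
  obtain ⟨A, hA⟩ := exists_isSyz n (ModuleCat.of R (R ⧸ p.asIdeal)) hfin
  have hAfin := isSyz_finite n _ _ hA hfin
  refine ⟨n, A, hA, ?_⟩
  have hst : StabRet (S := Localization.AtPrime p.asIdeal) (localizeM R p A) K := by
    refine stabRet_of_isSyz n _ _ _ _ (isSyz_localize p n _ _ hA) (IsMinSyz.isSyz n _ _ hK) ?_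
    obtain ⟨e⟩ := residue_equiv p
    exact (StabRet.refl _).congr e (LinearEquiv.refl _ _)
  obtain ⟨m, i, r, hir⟩ := hst
  have hY : ModuleCat.of R ((∀ j, X j) × (Fin m → R)) ∈ 𝒳 :=
    h𝒳.prod (h𝒳.pi X hX) (h𝒳.proj' _)
  have hYf : Module.Finite R ((∀ j, X j) × (Fin m → R)) := h𝒳.fin' hY
  let φ : ((∀ j, X j) × (Fin m → R)) →ₗ[R]
      ((∀ j, LocalizedModule p.asIdeal.primeCompl (X j)) ×
        (Fin m → Localization.AtPrime p.asIdeal)) :=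
    LinearMap.prodMap
      (.pi fun j ↦ LocalizedModule.mkLinearMap p.asIdeal.primeCompl (X j) ∘ₗ .proj j)
      (.pi fun j ↦ Algebra.linearMap R (Localization.AtPrime p.asIdeal) ∘ₗ .proj j)
  have hφ : IsLocalizedModule p.asIdeal.primeCompl φ := by
    have h1 := IsLocalizedModule.pi p.asIdeal.primeCompl
      (fun j => LocalizedModule.mkLinearMap p.asIdeal.primeCompl (X j))
    have h2 := IsLocalizedModule.pi p.asIdeal.primeCompl
      (fun _ : Fin m => Algebra.linearMap R (Localization.AtPrime p.asIdeal))
    exact IsLocalizedModule.prodMap _ _ _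
  let I := LinearMap.prodMap (e.toLinearMap ∘ₗ LinearMap.inl _ _ _) LinearMap.id ∘ₗ i
  let J := r ∘ₗ LinearMap.prodMap (LinearMap.fst _ _ _ ∘ₗ e.symm.toLinearMap) LinearMap.id
  have hIJ : ∀ k, J (I k) = k := fun k => by simp [I, J, hir]
  obtain ⟨f, g, s, hs, h⟩ := descend p φ (I.restrictScalars R) (J.restrictScalars R) hIJ
  exact ⟨_, f, g, s, hY, hs, h⟩

end Loc

section CM
open RingTheory.Sequence CategoryTheory.Abelian

lemma hom_quot_subsingleton {S : Type u} [CommRing S] (N : ModuleCat.{u} S) :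
    ∀ (rs : List S) (M : ModuleCat.{u} S), IsWeaklyRegular M rs →
      (∀ j ≤ rs.length, Subsingleton (Ext N M j)) →
      Subsingleton (N →ₗ[S] (M ⧸ (Ideal.ofList rs • ⊤ : Submodule S M)))
  | [], M, _, h => by
    have h0 : Subsingleton (Ext N M 0) := h 0 le_rfl
    have : Subsingleton (N ⟶ M) := Ext.addEquiv₀.subsingleton_congr.mp h0
    have : Subsingleton (N →ₗ[S] M) := ModuleCat.homAddEquiv.symm.subsingleton
    have e : (M ⧸ (Ideal.ofList ([] : List S) • ⊤ : Submodule S M)) ≃ₗ[S] M :=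
      Submodule.quotEquivOfEqBot _ (by simp)
    refine ⟨fun a b => ?_⟩
    have := Subsingleton.elim (e.toLinearMap ∘ₗ a) (e.toLinearMap ∘ₗ b)
    ext x
    exact e.injective (LinearMap.congr_fun this x)
  | r :: rs, M, hreg, h => by
    rw [isWeaklyRegular_cons_iff] at hreg
    have h' : ∀ i ≤ rs.length, Subsingleton (Ext N (ModuleCat.of S (QuotSMulTop r M)) i) := by
      intro i hi
      have zero1 := AddCommGrpCat.isZero_of_iff_subsingleton.mpr
        (h i (by simp only [List.length_cons]; omega))
      have zero2 := AddCommGrpCat.isZero_of_iff_subsingleton.mpr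
        (h (i + 1) (by simp only [List.length_cons]; omega))
      exact AddCommGrpCat.subsingleton_of_isZero <| ShortComplex.Exact.isZero_of_both_zeros
        ((Ext.covariant_sequence_exact₃' N hreg.1.smulShortComplex_shortExact) i (i + 1) rfl)
        (zero1.eq_zero_of_src _) (zero2.eq_zero_of_tgt _)
    have := hom_quot_subsingleton N rs (ModuleCat.of S (QuotSMulTop r M)) hreg.2 h'
    let e := Submodule.quotOfListConsSMulTopEquivQuotSMulTopInner M r rs
    refine ⟨fun a b => ?_⟩
    have h2 : e.toLinearMap ∘ₗ a = e.toLinearMap ∘ₗ b := this.elim _ _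
    ext x
    exact e.injective (LinearMap.congr_fun h2 x)

lemma local_dim_le {S : Type u} [CommRing S] [IsLocalRing S] (hCM : IsCMLocalRing S)
    (rs : List S) (hreg : IsWeaklyRegular S rs)
    (hass : IsLocalRing.maximalIdeal S ∈ associatedPrimes S (S ⧸ Ideal.ofList rs)) :
    ringKrullDim S ≤ (rs.length : ℕ∞) := by
  obtain ⟨hN, hd⟩ := hCM
  rw [← hd, WithBot.coe_le_coe]
  by_contra hlt
  rw [not_le] at hlt
  obtain ⟨_, ⟨ys, hym, hy, rfl⟩, hlen⟩ := lt_sSup_iff.1 hlt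
  have hlen' : rs.length < ys.length := by exact_mod_cast hlen
  have hyr : IsRegular S ys :=
    (IsLocalRing.isRegular_iff_isWeaklyRegular_of_subset_maximalIdeal hym).2 hy
  let k := ModuleCat.of S (S ⧸ IsLocalRing.maximalIdeal S)
  have hk : Module.Finite S k := inferInstanceAs (Module.Finite S (S ⧸ IsLocalRing.maximalIdeal S))
  have hext := ModuleCat.subsingleton_ext_of_exists_isRegular (IsLocalRing.maximalIdeal S) k
    (by
      rw [Module.support_eq_zeroLocus]
      change PrimeSpectrum.zeroLocus
        ((Module.annihilator S (S ⧸ IsLocalRing.maximalIdeal S) : Ideal S) : Set S) ⊆ _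
      rw [Ideal.annihilator_quotient])
    (ModuleCat.of S S)
    (by
      rw [lt_top_iff_ne_top]
      change IsLocalRing.maximalIdeal S • (⊤ : Ideal S) ≠ ⊤
      rw [smul_eq_mul, Ideal.mul_top]
      exact (IsLocalRing.maximalIdeal.isMaximal S).ne_top) ys hym hyr
  have hsub := hom_quot_subsingleton k rs (ModuleCat.of S S) hreg
    (fun j hj => hext j (lt_of_le_of_lt hj hlen'))
  obtain ⟨hprime, f, hf⟩ := (isAssociatedPrime_iff_exists_injective_linearMap _ _).1 hass
  let e : (S ⧸ Ideal.ofList rs) ≃ₗ[S] (S ⧸ (Ideal.ofList rs • ⊤ : Submodule S S)) :=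
    Submodule.quotEquivOfEq _ _ (by rw [smul_eq_mul, Ideal.mul_top])
  have h0 : e.toLinearMap ∘ₗ f = 0 := hsub.elim _ _
  have h1 : f 1 = 0 := e.injective (by rw [map_zero]; exact LinearMap.congr_fun h0 1)
  have h2 : (1 : S ⧸ IsLocalRing.maximalIdeal S) = 0 := hf (by rw [h1, map_zero])
  exact one_ne_zero h2

variable {R : Type u} [CommRing R] [IsNoetherianRing R]

lemma height_le_of_ass
    (hCM : ∀ p : PrimeSpectrum R, IsCMLocalRing (Localization.AtPrime p.asIdeal))
    (rs : List R) (hreg : IsWeaklyRegular R rs) (q : Ideal R)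
    (hq : q ∈ associatedPrimes R (R ⧸ Ideal.ofList rs)) : q.height ≤ rs.length := by
  have hqp : q.IsPrime := hq.isPrime
  have hreg' := IsWeaklyRegular.of_isLocalization (Localization.AtPrime q) q.primeCompl hreg
  have hass : IsLocalRing.maximalIdeal (Localization.AtPrime q) ∈
      associatedPrimes (Localization.AtPrime q)
        (Localization.AtPrime q ⧸ Ideal.ofList (rs.map (algebraMap R (Localization.AtPrime q)))) := by
    have h1 := Module.associatedPrimes.mem_associatedPrimes_of_comap_mem_associatedPrimes_of_isLocalizedModule
      (R' := Localization.AtPrime q) q.primeCompl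
      (Submodule.toLocalizedQuotient' (Localization.AtPrime q) q.primeCompl
        (Algebra.linearMap R (Localization.AtPrime q)) (Ideal.ofList rs))
      (IsLocalRing.maximalIdeal (Localization.AtPrime q))
      (by rw [← Ideal.under_def, Localization.AtPrime.under_maximalIdeal]; exact hq)
    rw [Ideal.localized'_eq_map, Ideal.map_ofList] at h1
    exact h1
  have := local_dim_le (hCM ⟨q, hqp⟩) _ hreg' hass
  rw [IsLocalization.AtPrime.ringKrullDim_eq_height q (Localization.AtPrime q), List.length_map] at this
  exact WithBot.coe_le_coe.1 this

lemma length_le_height (rs : List R) (hreg : IsWeaklyRegular R rs) (q : Ideal R) [q.IsPrime]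
    (hq : Ideal.ofList rs ≤ q) : rs.length ≤ q.height := by
  have hN : IsNoetherianRing (Localization.AtPrime q) :=
    IsLocalization.isNoetherianRing q.primeCompl _ inferInstance
  have h1 := IsWeaklyRegular.isRegular_of_isLocalization_of_mem (Localization.AtPrime q) q hreg
    (fun r hr => hq (Ideal.subset_span hr))
  have h2 := ringKrullDim_add_length_eq_ringKrullDim_of_isRegular _ h1
  rw [IsLocalization.AtPrime.ringKrullDim_eq_height q (Localization.AtPrime q)] at h2
  have hne : Nontrivial (Localization.AtPrime q ⧸ Ideal.ofList (rs.map (algebraMap R (Localization.AtPrime q)))) := by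
    rw [Ideal.Quotient.nontrivial_iff]
    intro htop
    apply h1.2
    rw [htop]; simp
  have h3 : (0 : WithBot ℕ∞) ≤ ringKrullDim (Localization.AtPrime q ⧸
    Ideal.ofList (rs.map (algebraMap R (Localization.AtPrime q)))) := ringKrullDim_nonneg_of_nontrivial
  have h4 : ((rs.length : ℕ∞) : WithBot ℕ∞) ≤ (q.height : WithBot ℕ∞) := by
    rw [← h2, List.length_map]
    exact le_add_of_nonneg_left h3
  exact WithBot.coe_le_coe.1 h4

lemma exists_regular_seq
    (hCM : ∀ p : PrimeSpectrum R, IsCMLocalRing (Localization.AtPrime p.asIdeal))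
    (p : Ideal R) [p.IsPrime] : ∀ h : ℕ, h ≤ p.height → ∃ rs : List R, rs.length = h ∧
      IsWeaklyRegular R rs ∧ Ideal.ofList rs ≤ p
  | 0, _ => ⟨[], rfl, by simp, by simp⟩
  | h + 1, hh => by
    obtain ⟨rs, hl, hreg, hp⟩ := exists_regular_seq hCM p h
      (le_trans (by exact_mod_cast Nat.le_succ h) hh)
    have hav : ¬ ((p : Set R) ⊆ ⋃ q ∈ associatedPrimes R (R ⧸ Ideal.ofList rs), (q : Set R)) := by
      rw [Ideal.subset_union_prime_finite (associatedPrimes.finite R (R ⧸ Ideal.ofList rs))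
        (f := fun q => q) ⊤ ⊤ (fun q hq _ _ => hq.isPrime)]
      rintro ⟨q, hq, hpq⟩
      have h1 := height_le_of_ass hCM rs hreg q hq
      have h2 := hh.trans ((Ideal.height_mono hpq).trans h1)
      rw [hl] at h2
      have : h + 1 ≤ h := by exact_mod_cast h2
      omega
    rw [biUnion_associatedPrimes_eq_compl_regular, Set.not_subset] at hav
    obtain ⟨r, hr, hr'⟩ := hav
    have hr2 : IsSMulRegular (R ⧸ Ideal.ofList rs) r := by simpa using hr'
    refine ⟨rs ++ [r], by simp [hl], ?_, ?_⟩
    · rw [isWeaklyRegular_append_iff]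
      refine ⟨hreg, ?_⟩
      rw [isWeaklyRegular_cons_iff]
      refine ⟨?_, by simp⟩
      let e : (R ⧸ Ideal.ofList rs) ≃ₗ[R] (R ⧸ (Ideal.ofList rs • ⊤ : Submodule R R)) :=
        Submodule.quotEquivOfEq _ _ (by rw [smul_eq_mul, Ideal.mul_top])
      exact (e.isSMulRegular_congr r).1 hr2
    · rw [Ideal.ofList_append, sup_le_iff]
      refine ⟨hp, ?_⟩
      rw [Ideal.ofList_singleton, Ideal.span_singleton_le_iff_mem]
      exact hr

/-- Primes over a regular sequence whose height is at most the length. -/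
lemma mem_ass_of_height_le (rs : List R) (hreg : IsWeaklyRegular R rs) (q : Ideal R) [q.IsPrime]
    (hq : Ideal.ofList rs ≤ q) (hh : q.height ≤ rs.length) :
    q ∈ associatedPrimes R (R ⧸ Ideal.ofList rs) := by
  apply Module.associatedPrimes.minimalPrimes_annihilator_subset_associatedPrimes
  rw [Ideal.annihilator_quotient]
  have := Ideal.finiteHeight_of_isNoetherianRing (Ideal.ofList rs)
  have := Ideal.finiteHeight_of_isNoetherianRing q
  apply Ideal.mem_minimalPrimes_of_height_le hq
  refine hh.trans ?_
  rw [Ideal.height_eq_inf_minimalPrimes]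
  refine le_iInf₂ fun J hJ => ?_
  have := hJ.1.1
  exact length_le_height rs hreg J hJ.1.2

/-- Associated primes of `R` are minimal. -/
lemma ass_minimal
    (hCM : ∀ p : PrimeSpectrum R, IsCMLocalRing (Localization.AtPrime p.asIdeal))
    (p q : Ideal R) [p.IsPrime] (hq : q ∈ associatedPrimes R R) (hpq : p ≤ q) : p = q := by
  have hqp : q.IsPrime := hq.isPrime
  have h0 : q ∈ associatedPrimes R (R ⧸ Ideal.ofList ([] : List R)) := by
    have e : (R ⧸ Ideal.ofList ([] : List R)) ≃ₗ[R] R :=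
      Submodule.quotEquivOfEqBot _ (by simp)
    rwa [LinearEquiv.AssociatedPrimes.eq e]
  have h1 := height_le_of_ass hCM [] (by simp) q h0
  simp only [List.length_nil, Nat.cast_zero, nonpos_iff_eq_zero] at h1
  rw [Ideal.height_eq_zero_iff] at h1
  exact le_antisymm hpq (h1.2 ⟨inferInstance, bot_le⟩ hpq)

end CM

section StepA
open scoped Pointwise
variable {R : Type u} [CommRing R]

lemma mem_smul_top {r : R} {M : Type u} [AddCommGroup M] [Module R M] {m : M} :
    m ∈ r • (⊤ : Submodule R M) ↔ ∃ x : M, r • x = m := by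
  simp [Submodule.mem_smul_pointwise_iff_exists]

lemma quot_mk_eq_zero {r : R} {M : Type u} [AddCommGroup M] [Module R M] {m : M} :
    (Submodule.Quotient.mk m : QuotSMulTop r M) = 0 ↔ ∃ x : M, r • x = m := by
  rw [Submodule.Quotient.mk_eq_zero, mem_smul_top]

/-- Quotient by a regular element. -/
lemma IsResolving.quot_mem [IsNoetherianRing R] {𝒴 : Set (ModuleCat.{u} R)} (h𝒴 : IsResolving R 𝒴) {r : R}
    {M : Type u} [AddCommGroup M] [Module R M] (hr : IsSMulRegular M r)
    (hM : ModuleCat.of R M ∈ 𝒴) : ModuleCat.of R (QuotSMulTop r M) ∈ up 𝒴 := by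
  refine h𝒴.cok_mem (LinearMap.lsmul R M r) (Submodule.mkQ (r • (⊤ : Submodule R M)))
    ⟨hr, Submodule.mkQ_surjective _, ?_⟩ hM hM
  ext m
  rw [Submodule.ker_mkQ, mem_smul_top]
  rfl

lemma quot_ses {r : R} {K P M : Type u} [AddCommGroup K] [Module R K] [AddCommGroup P]
    [Module R P] [AddCommGroup M] [Module R M] (f : K →ₗ[R] P) (g : P →ₗ[R] M)
    (h : IsSES f g) (hr : IsSMulRegular M r) :
    IsSES (QuotSMulTop.map r f) (QuotSMulTop.map r g) := by
  obtain ⟨hf, hg, hfg⟩ := h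
  refine ⟨?_, QuotSMulTop.map_surjective r hg, ?_⟩
  · rw [← LinearMap.ker_eq_bot, LinearMap.ker_eq_bot']
    intro k hk
    obtain ⟨k, rfl⟩ := Submodule.Quotient.mk_surjective _ k
    rw [QuotSMulTop.map_apply_mk, quot_mk_eq_zero] at hk
    obtain ⟨x, hx⟩ := hk
    have h0 : g (f k) = 0 := by
      have : f k ∈ LinearMap.ker g := hfg ▸ LinearMap.mem_range_self f k
      exact this
    have h1 : r • g x = 0 := by rw [← map_smul, hx, h0]
    have h2 : x ∈ LinearMap.range f := by
      rw [hfg]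
      exact hr.right_eq_zero_of_smul h1
    obtain ⟨k', rfl⟩ := h2
    rw [quot_mk_eq_zero]
    exact ⟨k', hf (by rw [map_smul, hx])⟩
  · exact (LinearMap.exact_iff.1
      (QuotSMulTop.map_exact r (LinearMap.exact_iff.2 hfg.symm) hg)).symm

lemma regular_of_projective {r : R} (hr : IsSMulRegular R r) (P : Type u) [AddCommGroup P]
    [Module R P] [Module.Projective R P] : IsSMulRegular P r := by
  obtain ⟨s, hs⟩ := Module.projective_lifting_property (Finsupp.linearCombination R (id : P → P))
    LinearMap.id (Finsupp.linearCombination_id_surjective R P)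
  refine IsSMulRegular.of_injective s (fun a b h => ?_) (N := P →₀ R) ?_
  · have := congrArg (Finsupp.linearCombination R (id : P → P)) h
    simpa [← LinearMap.comp_apply, hs] using this
  · intro a b h
    ext x
    exact hr (by simpa using DFunLike.congr_fun h x)

lemma quot_syz [IsNoetherianRing R] {𝒴 : Set (ModuleCat.{u} R)} (h𝒴 : IsResolving R 𝒴)
    (hup : up 𝒴 ⊆ 𝒴) {r : R} (hr : IsSMulRegular R r) :
    ∀ (n : ℕ) (M K : ModuleCat.{u} R), IsSyz R n M K → IsSMulRegular M r →
      ModuleCat.of R (QuotSMulTop r M) ∈ 𝒴 →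
      IsSMulRegular K r ∧ ModuleCat.of R (QuotSMulTop r K) ∈ 𝒴
  | 0, M, K, ⟨e⟩, h1, h2 => ⟨(e.isSMulRegular_congr r).2 h1,
      h𝒴.iso' (QuotSMulTop.congr r e.symm) h2⟩
  | n + 1, M, K, ⟨F, g, K', i, hF, hF', hg, hi, hig, hs⟩, h1, h2 => by
    have hFr : IsSMulRegular F r := regular_of_projective hr F
    refine quot_syz h𝒴 hup hr n K' K hs (IsSMulRegular.of_injective i hi hFr) ?_
    exact h𝒴.ker_mem _ _ (quot_ses i g ⟨hi, hg, hig⟩ h1)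
      (hup (h𝒴.quot_mem hFr (h𝒴.proj' F))) (h𝒴.le_up h2)

/-- If multiplication by a regular element on `A` factors through a member then `A` is one too,
as soon as `A / r A` is. -/
lemma mem_of_factor {𝒴 : Set (ModuleCat.{u} R)} (h𝒴 : IsResolving R 𝒴) {r : R}
    {A X : Type u} [AddCommGroup A] [Module R A] [AddCommGroup X] [Module R X]
    (f : A →ₗ[R] X) (g : X →ₗ[R] A) (hgf : ∀ a, g (f a) = r • a) (hr : IsSMulRegular A r)
    (hX : ModuleCat.of R X ∈ 𝒴) (hA : ModuleCat.of R (QuotSMulTop r A) ∈ 𝒴) :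
    ModuleCat.of R A ∈ 𝒴 := by
  let gb : (X ⧸ LinearMap.range f) →ₗ[R] QuotSMulTop r A :=
    (LinearMap.range f).liftQ ((Submodule.mkQ _) ∘ₗ g) (by
      rintro _ ⟨a, rfl⟩
      rw [LinearMap.mem_ker, LinearMap.comp_apply, hgf]
      exact quot_mk_eq_zero.2 ⟨a, rfl⟩)
  have hgb : ∀ x, gb (Submodule.Quotient.mk x) = Submodule.Quotient.mk (g x) := fun x => rfl
  have hmem : ModuleCat.of R ((X ⧸ LinearMap.range f) × A) ∈ 𝒴 := by
    refine h𝒴.ext' (LinearMap.prod (Submodule.mkQ (LinearMap.range f)) g)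
      (LinearMap.coprod gb (-(Submodule.mkQ (r • (⊤ : Submodule R A))))) ⟨?_, ?_, ?_⟩ hX hA
    · rw [← LinearMap.ker_eq_bot, LinearMap.ker_eq_bot']
      intro x hx
      have hx1 : x ∈ LinearMap.range f := by
        have := congrArg Prod.fst hx
        exact (Submodule.Quotient.mk_eq_zero _).1 this
      have hx2 : g x = 0 := congrArg Prod.snd hx
      obtain ⟨a, rfl⟩ := hx1
      rw [hgf] at hx2
      rw [hr.right_eq_zero_of_smul hx2, map_zero]
    · intro y
      obtain ⟨a, rfl⟩ := Submodule.Quotient.mk_surjective _ y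
      refine ⟨(0, -a), ?_⟩
      simp
    · ext ⟨c, a⟩
      obtain ⟨x, rfl⟩ := Submodule.Quotient.mk_surjective _ c
      constructor
      · rintro ⟨x', hx'⟩
        rw [← hx']
        change gb (Submodule.Quotient.mk x') + -(Submodule.Quotient.mk (g x')) = 0
        rw [hgb, add_neg_cancel]
      · intro h
        have h' : gb (Submodule.Quotient.mk x) + -(Submodule.Quotient.mk a : QuotSMulTop r A) = 0 := h
        rw [hgb, ← sub_eq_add_neg, ← Submodule.Quotient.mk_sub, quot_mk_eq_zero] at h'
        obtain ⟨a', ha'⟩ := h'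
        refine ⟨x - f a', ?_⟩
        refine Prod.ext ?_ ?_
        · change (Submodule.Quotient.mk (x - f a') : X ⧸ LinearMap.range f) = _
          rw [Submodule.Quotient.eq]
          exact ⟨-a', by simp⟩
        · change g (x - f a') = a
          rw [map_sub, hgf, ha']; abel
  exact h𝒴.ret (LinearMap.inr R (X ⧸ LinearMap.range f) A) (LinearMap.snd R _ _)
    (fun _ => rfl) hmem

lemma exists_avoid [IsNoetherianRing R]
    (hCM : ∀ p : PrimeSpectrum R, IsCMLocalRing (Localization.AtPrime p.asIdeal))
    (p : PrimeSpectrum R) (s : R) (hs : s ∉ p.asIdeal) :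
    ∃ r a t : R, r = a * s + t ∧ t ∈ p.asIdeal ∧ r ∉ p.asIdeal ∧ IsSMulRegular R r := by
  have hav : ¬ (((Ideal.span {s} ⊔ p.asIdeal : Ideal R) : Set R) ⊆
      ⋃ q ∈ insert p.asIdeal (associatedPrimes R R), (q : Set R)) := by
    rw [Ideal.subset_union_prime_finite ((associatedPrimes.finite R R).insert _)
      (f := fun q => q) ⊤ ⊤ (fun q hq _ _ => by
        rcases hq with rfl | hq
        · exact p.isPrime
        · exact hq.isPrime)]
    rintro ⟨q, hq, hpq⟩
    have hsq : s ∈ q := hpq (Ideal.mem_sup_left (Ideal.mem_span_singleton_self s))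
    rcases hq with rfl | hq
    · exact hs hsq
    · have := ass_minimal hCM p.asIdeal q hq (le_sup_right.trans hpq)
      exact hs (this ▸ hsq)
  rw [Set.not_subset] at hav
  obtain ⟨r, hr, hr'⟩ := hav
  obtain ⟨y, hy, t, ht, rfl⟩ := Submodule.mem_sup.1 hr
  obtain ⟨a, rfl⟩ := Ideal.mem_span_singleton'.1 hy
  rw [Set.biUnion_insert, Set.mem_union, not_or, biUnion_associatedPrimes_eq_compl_regular] at hr'
  exact ⟨_, a, t, rfl, ht, hr'.1, by simpa using hr'.2⟩

lemma stepA [IsNoetherianRing R]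
    (hCM : ∀ p : PrimeSpectrum R, IsCMLocalRing (Localization.AtPrime p.asIdeal))
    {𝒳 : Set (ModuleCat.{u} R)} (h𝒳 : IsResolving R 𝒳) (hD : Dominant R 𝒳)
    (p : PrimeSpectrum R) : ModuleCat.of R (R ⧸ p.asIdeal) ∈ upInf 𝒳 := by
  have hwf : WellFounded (fun a b : PrimeSpectrum R => a.asIdeal > b.asIdeal) :=
    InvImage.wf PrimeSpectrum.asIdeal (wellFounded_gt (α := Ideal R))
  induction p using hwf.induction with
  | _ p ih =>
  have h𝒴 := upInf_resolving h𝒳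
  obtain ⟨n, A, hA, X, f, g, s, hX, hs, hgf⟩ := exists_factor h𝒳 hD p
  obtain ⟨r, a, t, hr, ht, hrp, hreg⟩ := exists_avoid hCM p s hs
  have hfac : Fac t (R ⧸ p.asIdeal) := by
    refine ⟨ModuleCat.of R PUnit.{u+1}, 0, 0, inferInstanceAs (Module.Finite R PUnit.{u+1}),
      inferInstanceAs (Module.Projective R PUnit.{u+1}), fun x => ?_⟩
    obtain ⟨x, rfl⟩ := Ideal.Quotient.mk_surjective x
    rw [LinearMap.zero_apply]
    symm
    exact Ideal.Quotient.eq_zero_iff_mem.2 (p.asIdeal.mul_mem_right x ht)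
  obtain ⟨G, b, c, hG, hG', hbc⟩ := fac_of_isSyz t n _ _ hA hfac
  have hregp : IsSMulRegular (R ⧸ p.asIdeal) r := by
    rw [isSMulRegular_quotient_iff_mem_of_smul_mem]
    intro x hx
    exact (p.isPrime.mem_or_mem hx).resolve_left hrp
  have hbase : ModuleCat.of R (QuotSMulTop r (R ⧸ p.asIdeal)) ∈ upInf 𝒳 := by
    refine mem_of_primes h𝒴 (p.asIdeal ⊔ Ideal.span {r}) (fun q hq => ih q ?_) _ ?_
    · refine lt_of_le_of_ne (le_sup_left.trans hq) fun h => hrp ?_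
      rw [h]
      exact hq (Ideal.mem_sup_right (Ideal.mem_span_singleton_self r))
    · intro y hy m
      obtain ⟨m, rfl⟩ := Submodule.Quotient.mk_surjective _ m
      obtain ⟨m, rfl⟩ := Ideal.Quotient.mk_surjective m
      obtain ⟨y, hyp, z, hz, rfl⟩ := Submodule.mem_sup.1 hy
      obtain ⟨z, rfl⟩ := Ideal.mem_span_singleton'.1 hz
      rw [← Submodule.Quotient.mk_smul, quot_mk_eq_zero]
      refine ⟨Ideal.Quotient.mk _ (z * m), ?_⟩
      change Ideal.Quotient.mk _ (r * (z * m)) = Ideal.Quotient.mk _ ((y + z * r) * m)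
      rw [Ideal.Quotient.eq]
      have : r * (z * m) - (y + z * r) * m = - (m * y) := by ring
      rw [this]
      exact neg_mem (p.asIdeal.mul_mem_left m hyp)
  obtain ⟨hAr, hAq⟩ := quot_syz h𝒴 upInf_up hreg n _ A hA hregp hbase
  have hXG : ModuleCat.of R (X × G) ∈ upInf 𝒳 := ⟨0, h𝒳.prod hX (h𝒳.proj' G)⟩
  have hAm : ModuleCat.of R A ∈ upInf 𝒳 := by
    refine mem_of_factor h𝒴 (LinearMap.prod f b) (LinearMap.coprod (a • g) c) (fun x => ?_)
      hAr hXG hAq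
    change a • g (f x) + c (b x) = r • x
    rw [hgf, hbc, hr, add_smul, mul_smul]
  obtain ⟨k, hk⟩ := hAm
  exact ⟨_, mem_upn_of_isSyz h𝒳 k n _ _ hA hk⟩

end StepA

section StepB
variable {R : Type u} [CommRing R] [IsNoetherianRing R]
open RingTheory.Sequence

lemma regular_quot_mem {𝒳 : Set (ModuleCat.{u} R)} (h𝒳 : IsResolving R 𝒳) :
    ∀ (rs : List R) (k : ℕ) (M : Type u) [AddCommGroup M] [Module R M], IsWeaklyRegular M rs →
      ModuleCat.of R M ∈ upn 𝒳 k →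
      ModuleCat.of R (M ⧸ (Ideal.ofList rs • ⊤ : Submodule R M)) ∈ upn 𝒳 (k + rs.length)
  | [], k, M, _, _, _, hM =>
    (upn_resolving h𝒳 k).iso' (Submodule.quotEquivOfEqBot _ (by simp)).symm hM
  | r :: rs, k, M, _, _, hreg, hM => by
    rw [isWeaklyRegular_cons_iff] at hreg
    have h1 := regular_quot_mem h𝒳 rs (k + 1) (QuotSMulTop r M) hreg.2
      ((upn_resolving h𝒳 k).quot_mem hreg.1 hM)
    have h2 : k + (r :: rs).length = k + 1 + rs.length := by simp only [List.length_cons]; omega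
    rw [h2]
    exact (upn_resolving h𝒳 _).iso'
      (Submodule.quotOfListConsSMulTopEquivQuotSMulTopInner M r rs).symm h1

lemma descendSyz {𝒳 : Set (ModuleCat.{u} R)} (h𝒳 : IsResolving R 𝒳) (d : ℕ) (I : Ideal R)
    (hI : ModuleCat.of R (R ⧸ I) ∈ upn 𝒳 d)
    (h : ∀ q : PrimeSpectrum R, I ≤ q.asIdeal →
      q.asIdeal ∈ associatedPrimes R (R ⧸ I) ∨ ModuleCat.of R (R ⧸ q.asIdeal) ∈ upn 𝒳 d) :
    ∀ k : ℕ, (∀ q : PrimeSpectrum R, I ≤ q.asIdeal →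
      ModuleCat.of R (R ⧸ q.asIdeal) ∈ upn 𝒳 (d + k)) →
      ∀ q : PrimeSpectrum R, I ≤ q.asIdeal → ModuleCat.of R (R ⧸ q.asIdeal) ∈ upn 𝒳 d
  | 0, hk => hk
  | k + 1, hk => by
    refine descendSyz h𝒳 d I hI h k fun q hq => ?_
    rcases h q hq with hass | hmem
    · obtain ⟨_, f, hf⟩ := (isAssociatedPrime_iff_exists_injective_linearMap _ _).1 hass
      refine (upn_resolving h𝒳 (d + k)).ker_mem f (Submodule.mkQ (LinearMap.range f))
        ⟨hf, Submodule.mkQ_surjective _, by simp⟩ (upn_mono h𝒳 (Nat.le_add_right d k) hI) ?_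
      refine mem_of_primes (upn_resolving h𝒳 (d + k + 1)) I hk _ ?_
      intro y hy m
      obtain ⟨m, rfl⟩ := Submodule.Quotient.mk_surjective _ m
      obtain ⟨m, rfl⟩ := Ideal.Quotient.mk_surjective m
      have : y • (Ideal.Quotient.mk I m) = 0 :=
        Ideal.Quotient.eq_zero_iff_mem.2 (I.mul_mem_right m hy)
      rw [← Submodule.Quotient.mk_smul, this, Submodule.Quotient.mk_zero]
    · exact upn_mono h𝒳 (Nat.le_add_right d k) hmem

lemma exists_bound {𝒳 : Set (ModuleCat.{u} R)} (h𝒳 : IsResolving R 𝒳)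
    (hA : ∀ p : PrimeSpectrum R, ModuleCat.of R (R ⧸ p.asIdeal) ∈ upInf 𝒳)
    (S : Set (Ideal R)) (hS : S.Finite) :
    ∃ k : ℕ, ∀ q : PrimeSpectrum R, q.asIdeal ∈ S →
      ModuleCat.of R (R ⧸ q.asIdeal) ∈ upn 𝒳 k := by
  choose n hn using hA
  have hS' : (PrimeSpectrum.asIdeal ⁻¹' S).Finite :=
    hS.preimage (fun a _ b _ h => PrimeSpectrum.ext h)
  obtain ⟨k, hk⟩ := (hS'.image n).bddAbove
  exact ⟨k, fun q hq => upn_mono h𝒳 (hk ⟨q, hq, rfl⟩) (hn q)⟩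

lemma stepB
    (hCM : ∀ p : PrimeSpectrum R, IsCMLocalRing (Localization.AtPrime p.asIdeal))
    (d : ℕ) (hd : ringKrullDim R = (d : WithBot ℕ∞))
    {𝒳 : Set (ModuleCat.{u} R)} (h𝒳 : IsResolving R 𝒳)
    (hA : ∀ p : PrimeSpectrum R, ModuleCat.of R (R ⧸ p.asIdeal) ∈ upInf 𝒳) :
    ∀ (m : ℕ) (p : PrimeSpectrum R), (d : ℕ∞) < p.asIdeal.height + m →
      ModuleCat.of R (R ⧸ p.asIdeal) ∈ upn 𝒳 d := by
  have hle : ∀ p : PrimeSpectrum R, p.asIdeal.height ≤ d := fun p => by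
    have := Ideal.height_le_ringKrullDim_of_ne_top p.isPrime.ne_top
    rw [hd] at this
    exact WithBot.coe_le_coe.1 this
  intro m
  induction m with
  | zero =>
    intro p hp
    simp only [Nat.cast_zero, add_zero] at hp
    exact absurd (hle p) (not_le.2 hp)
  | succ m ih =>
    intro p hp
    obtain ⟨h, hh⟩ := ENat.ne_top_iff_exists.1
      (ne_top_of_le_ne_top (ENat.natCast_ne_top d) (hle p))
    have hhd : h ≤ d := by
      have := hle p
      rw [← hh] at this
      exact_mod_cast this
    rw [← hh] at hp
    have hp' : d < h + (m + 1) := by exact_mod_cast hp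
    obtain ⟨rs, hl, hreg, hrp⟩ := exists_regular_seq hCM p.asIdeal h hh.le
    have hI : ModuleCat.of R (R ⧸ Ideal.ofList rs) ∈ upn 𝒳 d := by
      have h1 := regular_quot_mem h𝒳 rs 0 R hreg (h𝒳.proj' R)
      refine upn_mono h𝒳 (m := 0 + rs.length) (by omega) ?_
      exact (upn_resolving h𝒳 _).iso'
        (Submodule.quotEquivOfEq _ _ (by rw [smul_eq_mul, Ideal.mul_top])) h1
    have hq : ∀ q : PrimeSpectrum R, Ideal.ofList rs ≤ q.asIdeal →
        q.asIdeal ∈ associatedPrimes R (R ⧸ Ideal.ofList rs) ∨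
          ModuleCat.of R (R ⧸ q.asIdeal) ∈ upn 𝒳 d := by
      intro q hq
      obtain ⟨h', hh'⟩ := ENat.ne_top_iff_exists.1
        (ne_top_of_le_ne_top (ENat.natCast_ne_top d) (hle q))
      by_cases hlt : h' ≤ h
      · left
        refine mem_ass_of_height_le rs hreg _ hq ?_
        rw [← hh', hl]
        exact_mod_cast hlt
      · right
        refine ih q ?_
        rw [← hh']
        have : d < h' + m := by omega
        exact_mod_cast this
    obtain ⟨k, hk⟩ := exists_bound h𝒳 hA _ (associatedPrimes.finite R (R ⧸ Ideal.ofList rs))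
    refine descendSyz h𝒳 d _ hI hq k (fun q hqq => ?_) p hrp
    rcases hq q hqq with h1 | h1
    · exact upn_mono h𝒳 (Nat.le_add_left k d) (hk q h1)
    · exact upn_mono h𝒳 (Nat.le_add_right d k) h1

end StepB

/-- Corollary: over a Cohen-Macaulay ring of finite Krull dimension `d`, a resolving
subcategory is dominant iff it contains some syzygy `Ω^n (R/p)` for each prime `p`,
iff it contains some `d`-th syzygy `Ω^d (R/p)` for each prime `p`. -/
theorem dominant_iff_syzygies [IsNoetherianRing R]
    (hCM : ∀ p : PrimeSpectrum R, IsCMLocalRing (Localization.AtPrime p.asIdeal))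
    (d : ℕ) (hd : ringKrullDim R = (d : WithBot ℕ∞))
    (𝒳 : Set (ModuleCat.{u} R)) (h𝒳 : IsResolving R 𝒳) :
    (Dominant R 𝒳 ↔ ∀ p : PrimeSpectrum R, ∃ (n : ℕ) (K : ModuleCat.{u} R),
      IsSyz R n (ModuleCat.of R (R ⧸ p.asIdeal)) K ∧ K ∈ 𝒳) ∧
    (Dominant R 𝒳 ↔ ∀ p : PrimeSpectrum R, ∃ K : ModuleCat.{u} R,
      IsSyz R d (ModuleCat.of R (R ⧸ p.asIdeal)) K ∧ K ∈ 𝒳) := by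
  have h31 : (∀ p : PrimeSpectrum R, ∃ K : ModuleCat.{u} R,
      IsSyz R d (ModuleCat.of R (R ⧸ p.asIdeal)) K ∧ K ∈ 𝒳) → Dominant R 𝒳 := fun h =>
    dominant_of_syzygies h𝒳 fun p => ⟨d, h p⟩
  have h13 : Dominant R 𝒳 → ∀ p : PrimeSpectrum R, ∃ K : ModuleCat.{u} R,
      IsSyz R d (ModuleCat.of R (R ⧸ p.asIdeal)) K ∧ K ∈ 𝒳 := fun hD p => by
    refine exists_isSyz_of_mem_upn d _ ?_
    refine stepB hCM d hd h𝒳 (stepA hCM h𝒳 hD) (d + 1) p ?_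
    refine lt_of_lt_of_le ?_ le_add_self
    exact_mod_cast Nat.lt_succ_self d
  exact ⟨⟨fun hD p => ⟨d, h13 hD p⟩, fun h => dominant_of_syzygies h𝒳 h⟩, h13, h31⟩

end ResolvPaper
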